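/- arXiv:1404.4856 — 4 statements merged into one kernel-verified Lean document; each statement's English description precedes it below -/
import Mathlib

section
/- Let (G, I) be an interval liminf game where I = I_1 ∪ ⋯ ∪ I_r is a finite union of nonempty bounded closed integer intervals with sup I_i < inf I_{i+1} for all i, and let Ω_I : ℤ → [1, 2r+1] be defined by Ω_I(n) = 2i if n ∈ I_i, Ω_I(n) = 1 if n < inf I_1, and Ω_I(n) = max{1 + 2i : sup I_i < n} otherwise. Construct a parity game G' from G by subdividing every edge e = (u, v) with a new vertex x_e of priority Ω_I(w(e)) (so the edges u → x_e and x_e → v replace e, with x_e having the single successor v), and assigning priority 2r+1 to every original vertex of G. Then Eve has a winning strategy in the interval liminf game (G, I) if and only if Eve has a winning strategy in the parity game G'. -/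
/-!
Inserting the subdivision vertex of each traversed edge is a bijection between plays of `G`
and plays of `G.subdivide` (`liftPlay_isPlay`, `exists_eq_liftPlay`). The same insertion and
deletion on finite histories turns an Eve strategy on either graph into one on the other with
corresponding consistent plays, since subdivision vertices offer no choice
(`eveWins_subdivide_of_eveWins`, `eveWins_of_eveWins_subdivide`).

It remains to compare the objectives on a play and its lift (`win_iff_parityWin_liftPlay`).
As `V` is finite, the liminf of the weights is the least weight `m` seen infinitely often.
`OmegaI` is monotone (`OmegaI_mono`) and bounded by the priority `2r+1` of the original
vertices, so the least priority seen infinitely often on the lift is `OmegaI m`, which is even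
exactly when `m ∈ I` (`even_OmegaI_iff`).
-/

open Filter

/-- A game graph: vertex set `V`, Eve's vertices `Eve`, edge relation `E` (every vertex
has a successor), integer weight function `w`, and initial vertex `init`. -/
structure GameGraph (V : Type) where
  Eve : Set V
  E : V → V → Prop
  w : V → V → ℤ
  init : V
  succ : ∀ v, ∃ u, E v u

namespace GameGraph

variable {V : Type}

/-- `π` is a play starting at vertex `v`. -/
def IsPlayFrom (G : GameGraph V) (v : V) (π : ℕ → V) : Prop :=
  π 0 = v ∧ ∀ i, G.E (π i) (π (i + 1))

/-- `π` is a play (from the initial vertex). -/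
def IsPlay (G : GameGraph V) (π : ℕ → V) : Prop :=
  G.IsPlayFrom G.init π

/-- The prefix `π 0, …, π i` of a play, as a list. -/
def prefixList (π : ℕ → V) (i : ℕ) : List V :=
  List.ofFn (fun j : Fin (i + 1) => π j)

/-- A (history-based) strategy for Eve is legal if it always proposes a successor
of the current (Eve) vertex. -/
def EveLegal (G : GameGraph V) (σ : List V → V) : Prop :=
  ∀ (l : List V) (v : V), v ∈ G.Eve → G.E v (σ (l ++ [v]))

/-- A (history-based) strategy for Adam is legal if it always proposes a successor
of the current (Adam) vertex. -/
def AdamLegal (G : GameGraph V) (σ : List V → V) : Prop :=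
  ∀ (l : List V) (v : V), v ∉ G.Eve → G.E v (σ (l ++ [v]))

/-- The play `π` is consistent with Eve's strategy `σ`. -/
def ConsEve (G : GameGraph V) (σ : List V → V) (π : ℕ → V) : Prop :=
  ∀ i, π i ∈ G.Eve → π (i + 1) = σ (prefixList π i)

/-- The play `π` is consistent with Adam's strategy `σ`. -/
def ConsAdam (G : GameGraph V) (σ : List V → V) (π : ℕ → V) : Prop :=
  ∀ i, π i ∉ G.Eve → π (i + 1) = σ (prefixList π i)

/-- Eve has a winning strategy for the objective `Win`. -/
def EveWins (G : GameGraph V) (Win : (ℕ → V) → Prop) : Prop :=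
  ∃ σ : List V → V, G.EveLegal σ ∧ ∀ π, G.IsPlay π → G.ConsEve σ π → Win π

/-- Adam has a winning strategy: he can ensure the objective `Win` of Eve fails. -/
def AdamWins (G : GameGraph V) (Win : (ℕ → V) → Prop) : Prop :=
  ∃ σ : List V → V, G.AdamLegal σ ∧ ∀ π, G.IsPlay π → G.ConsAdam σ π → ¬ Win π

/-- Consistency with a positional Eve strategy. -/
def ConsEvePos (G : GameGraph V) (f : V → V) (π : ℕ → V) : Prop :=
  ∀ i, π i ∈ G.Eve → π (i + 1) = f (π i)

/-- Consistency with a positional Adam strategy. -/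
def ConsAdamPos (G : GameGraph V) (f : V → V) (π : ℕ → V) : Prop :=
  ∀ i, π i ∉ G.Eve → π (i + 1) = f (π i)

/-- Eve has a positional (memoryless) winning strategy. -/
def EveWinsPos (G : GameGraph V) (Win : (ℕ → V) → Prop) : Prop :=
  ∃ f : V → V, (∀ v ∈ G.Eve, G.E v (f v)) ∧
    ∀ π, G.IsPlay π → G.ConsEvePos f π → Win π

/-- Adam has a positional (memoryless) winning strategy. -/
def AdamWinsPos (G : GameGraph V) (Win : (ℕ → V) → Prop) : Prop :=
  ∃ f : V → V, (∀ v, v ∉ G.Eve → G.E v (f v)) ∧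
    ∀ π, G.IsPlay π → G.ConsAdamPos f π → ¬ Win π

/-- The run of the memory structure `(δ, m)` of a finite-state machine while
reading the play `π`: after `i` steps it has read `π 0, …, π (i-1)`. -/
def memRun {M : Type} (δ : M → V → M) (m : M) (π : ℕ → V) : ℕ → M
  | 0 => m
  | i + 1 => δ (memRun δ m π i) (π i)

/-- Consistency of a play with the finite-memory strategy given by the machine
`(m0, δ, o)`: at step `i`, the machine has memory `memRun δ m0 π i` (having read
`π 0, …, π (i-1)`) and outputs the move `o (memRun δ m0 π i) (π i)`. -/
def ConsEveFM (G : GameGraph V) {M : Type} (m0 : M) (δ : M → V → M)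
    (o : M → V → V) (π : ℕ → V) : Prop :=
  ∀ i, π i ∈ G.Eve → π (i + 1) = o (memRun δ m0 π i) (π i)

/-- Eve has a finite-memory winning strategy, i.e. one computed by a
finite-state machine. -/
def EveWinsFM (G : GameGraph V) (Win : (ℕ → V) → Prop) : Prop :=
  ∃ (M : Type) (_ : Fintype M) (m0 : M) (δ : M → V → M) (o : M → V → V),
    (∀ m, ∀ v ∈ G.Eve, G.E v (o m v)) ∧
    ∀ π, G.IsPlay π → G.ConsEveFM m0 δ o π → Win π

/-- The total weight `w(π[..k])` of the length-`k` prefix of a play. -/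
def partialSum (G : GameGraph V) (π : ℕ → V) (k : ℕ) : ℤ :=
  ∑ i ∈ Finset.range k, G.w (π i) (π (i + 1))

/-- The (liminf) mean-payoff of a play. -/
noncomputable def MP (G : GameGraph V) (π : ℕ → V) : ℝ :=
  liminf (fun k => (G.partialSum π k : ℝ) / (k : ℝ)) atTop

/-- The liminf payoff of a play, in the extended reals. -/
noncomputable def liminfPayoff (G : GameGraph V) (π : ℕ → V) : EReal :=
  liminf (fun i => ((G.w (π i) (π (i + 1)) : ℝ) : EReal)) atTop

/-- The total-sum payoff of a play, in the extended reals. -/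
noncomputable def totalPayoff (G : GameGraph V) (π : ℕ → V) : EReal :=
  liminf (fun k => ((G.partialSum π k : ℝ) : EReal)) atTop

/-- The discounted sum of a play, with discount factor `lam`. -/
noncomputable def DS (G : GameGraph V) (lam : ℝ) (π : ℕ → V) : ℝ :=
  ∑' i : ℕ, lam ^ i * (G.w (π i) (π (i + 1)) : ℝ)

/-- A play of a (min-)parity game is winning for Eve iff the minimal priority
occurring infinitely often is even. -/
def ParityWin (Ω : V → ℕ) (π : ℕ → V) : Prop :=
  ∃ p, Even p ∧ (∀ N, ∃ k, N ≤ k ∧ Ω (π k) = p) ∧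
    ∀ q, (∀ N, ∃ k, N ≤ k ∧ Ω (π k) = q) → p ≤ q

end GameGraph
open scoped Classical in
/-- The priority function `Ω_I` associated with the union of the integer intervals
`[lo i, hi i]` (`i`-th interval being `I_{i+1}` in 1-based numbering):
`Ω_I(n) = 2(i+1)` if `n ∈ I_{i+1}`, `Ω_I(n) = 1` if `n` is below all intervals, and
otherwise the maximum of `2(i+1)+1` over intervals `I_{i+1}` lying strictly below `n`. -/
noncomputable def OmegaI (r : ℕ) (lo hi : Fin r → ℤ) (n : ℤ) : ℕ :=
  if h : ∃ i : Fin r, lo i ≤ n ∧ n ≤ hi i then 2 * (h.choose.1 + 1)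
  else if hS : (Finset.univ.filter (fun i : Fin r => hi i < n)).Nonempty then
    2 * ((Finset.univ.filter (fun i : Fin r => hi i < n)).max' hS).1 + 3
  else 1

/-- The parity game obtained from a weighted game graph by subdividing every edge:
the subdividing vertex of edge `e` is the extra vertex `Sum.inr e`, which has the
single successor given by the head of `e`. -/
noncomputable def GameGraph.subdivide {V : Type} (G : GameGraph V) :
    GameGraph (V ⊕ {e : V × V // G.E e.1 e.2}) where
  Eve := Sum.inl '' G.Eve
  E x y :=
    (∃ e : {e : V × V // G.E e.1 e.2}, x = Sum.inl e.1.1 ∧ y = Sum.inr e) ∨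
    (∃ e : {e : V × V // G.E e.1 e.2}, x = Sum.inr e ∧ y = Sum.inl e.1.2)
  w _ _ := 0
  init := Sum.inl G.init
  succ := by
    rintro (v | e)
    · obtain ⟨u, hu⟩ := G.succ v
      exact ⟨Sum.inr ⟨(v, u), hu⟩, Or.inl ⟨⟨(v, u), hu⟩, rfl, rfl⟩⟩
    · exact ⟨Sum.inl e.1.2, Or.inr ⟨e, rfl, rfl⟩⟩

/-- The priority function of the subdivided game: original vertices get priority
`2r+1`, and the subdividing vertex of an edge `e` gets priority `Ω_I(w(e))`. -/
noncomputable def subdivPriority {V : Type} (G : GameGraph V) (r : ℕ) (lo hi : Fin r → ℤ) :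
    (V ⊕ {e : V × V // G.E e.1 e.2}) → ℕ
  | Sum.inl _ => 2 * r + 1
  | Sum.inr e => OmegaI r lo hi (G.w e.1.1 e.1.2)

/-! ### The priority function -/

/-- Unfolding of `OmegaI` without choice. -/
theorem OmegaI_spec (r : ℕ) (lo hi : Fin r → ℤ) (n : ℤ) :
    (∃ i : Fin r, lo i ≤ n ∧ n ≤ hi i ∧ OmegaI r lo hi n = 2 * (i.1 + 1)) ∨
    ((∀ i : Fin r, ¬ (lo i ≤ n ∧ n ≤ hi i)) ∧
      ((∃ i : Fin r, hi i < n ∧ (∀ j : Fin r, hi j < n → j ≤ i) ∧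
          OmegaI r lo hi n = 2 * i.1 + 3) ∨
        ((∀ i : Fin r, n ≤ hi i) ∧ OmegaI r lo hi n = 1))) := by
  classical
  unfold OmegaI
  split_ifs with h hS
  · exact Or.inl ⟨h.choose, h.choose_spec.1, h.choose_spec.2, rfl⟩
  · refine Or.inr ⟨fun i hi => h ⟨i, hi⟩, Or.inl ⟨_, ?_, ?_, rfl⟩⟩
    · have := Finset.max'_mem _ hS
      simpa using this
    · intro j hj
      exact Finset.le_max' _ _ (by simpa using hj)
  · refine Or.inr ⟨fun i hi => h ⟨i, hi⟩, Or.inr ⟨fun i => ?_, rfl⟩⟩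
    by_contra hlt
    exact hS ⟨i, by simpa using hlt⟩

theorem OmegaI_le (r : ℕ) (lo hi : Fin r → ℤ) (n : ℤ) : OmegaI r lo hi n ≤ 2 * r + 1 := by
  rcases OmegaI_spec r lo hi n with ⟨i, -, -, h⟩ | ⟨-, ⟨i, -, -, h⟩ | ⟨-, h⟩⟩
  · have := i.2; omega
  · have := i.2; omega
  · omega

theorem even_OmegaI_iff (r : ℕ) (lo hi : Fin r → ℤ) (n : ℤ) :
    Even (OmegaI r lo hi n) ↔ ∃ i : Fin r, lo i ≤ n ∧ n ≤ hi i := by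
  rw [Nat.even_iff]
  rcases OmegaI_spec r lo hi n with ⟨i, h1, h2, h⟩ | ⟨h0, ⟨i, -, -, h⟩ | ⟨-, h⟩⟩
  · exact ⟨fun _ => ⟨i, h1, h2⟩, fun _ => by omega⟩
  · exact ⟨fun _ => by omega, fun ⟨i, hi⟩ => absurd hi (h0 i)⟩
  · exact ⟨fun _ => by omega, fun ⟨i, hi⟩ => absurd hi (h0 i)⟩

theorem OmegaI_mono (r : ℕ) (lo hi : Fin r → ℤ) (hne : ∀ i, lo i ≤ hi i)
    (hord : ∀ i j : Fin r, i < j → hi i < lo j) : Monotone (OmegaI r lo hi) := by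
  intro m n hmn
  have hlt : ∀ i j : Fin r, lo i ≤ hi j → i ≤ j := fun i j h => by
    by_contra hc
    exact absurd (hord j i (not_le.1 hc)) (by omega)
  rcases OmegaI_spec r lo hi m with ⟨i, h1, h2, h⟩ | ⟨h0, ⟨i, h1, h2, h⟩ | ⟨h1, h⟩⟩ <;>
  rcases OmegaI_spec r lo hi n with ⟨j, k1, k2, k⟩ | ⟨k0, ⟨j, k1, k2, k⟩ | ⟨k1, k⟩⟩ <;>
  rw [h, k]
  · have : i.1 ≤ j.1 := hlt i j (by omega)
    omega
  · have : i.1 ≤ j.1 := k2 i (by have := k0 i; omega)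
    omega
  · exact absurd ⟨by omega, k1 i⟩ (k0 i)
  · have hij : i ≤ j := hlt i j (by have := hne i; omega)
    have : i ≠ j := by rintro rfl; omega
    have : i.1 ≠ j.1 := fun e => this (Fin.ext e)
    have : i.1 ≤ j.1 := hij
    omega
  · have : i.1 ≤ j.1 := k2 i (by omega)
    omega
  · have := k1 i; omega
  · omega
  · omega

/-! ### The liminf of a sequence with finitely many values -/

/-- A sequence with finite range attains infinitely often a value that is eventually a
lower bound. -/
theorem exists_freq_min (a : ℕ → ℤ) (hfin : (Set.range a).Finite) :
    ∃ m, (∃ᶠ k in atTop, a k = m) ∧ ∀ᶠ k in atTop, m ≤ a k := by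
  have hTfin : {m | ∃ᶠ k in atTop, a k = m}.Finite := hfin.subset fun m hm => by
    obtain ⟨k, hk⟩ := hm.exists
    exact ⟨k, hk⟩
  have hev : ∀ᶠ k in atTop, a k ∈ {m | ∃ᶠ k in atTop, a k = m} := by
    have : ∀ᶠ k in atTop, ∀ m ∈ Set.range a, ¬ (∃ᶠ k in atTop, a k = m) → a k ≠ m :=
      (Filter.eventually_all_finite hfin).2 fun m _ => by
        by_cases h : ∃ᶠ k in atTop, a k = m
        · exact Eventually.of_forall fun _ hc => absurd h hc
        · exact (not_frequently.1 h).mono fun _ hk _ => hk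
    filter_upwards [this] with k hk
    by_contra hc
    exact hk _ ⟨k, rfl⟩ hc rfl
  obtain ⟨k, hk⟩ := hev.exists
  obtain ⟨m, hm, hmin⟩ := Set.exists_min_image _ id hTfin ⟨_, hk⟩
  exact ⟨m, hm, hev.mono fun k hk => hmin _ hk⟩

theorem liminf_eq_of_freq_min (a : ℕ → ℤ) (m : ℤ) (hm : ∃ᶠ k in atTop, a k = m)
    (hle : ∀ᶠ k in atTop, m ≤ a k) :
    liminf (fun i => ((a i : ℝ) : EReal)) atTop = ((m : ℝ) : EReal) := by
  apply le_antisymm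
  · exact liminf_le_of_frequently_le' (hm.mono fun k hk => by rw [hk])
  · exact le_liminf_of_le (by isBoundedDefault) (hle.mono fun k hk => by exact_mod_cast hk)

/-! ### Plays of the subdivided graph -/

namespace GameGraph

variable {V : Type}

/-- The play of `G.subdivide` obtained from a play of `G` by inserting, after each vertex,
the subdivision vertex of the edge taken next. -/
def liftPlay (G : GameGraph V) (π : ℕ → V) (h : ∀ i, G.E (π i) (π (i + 1))) (n : ℕ) :
    V ⊕ {e : V × V // G.E e.1 e.2} :=
  if n % 2 = 0 then Sum.inl (π (n / 2)) else Sum.inr ⟨(π (n / 2), π (n / 2 + 1)), h _⟩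

theorem liftPlay_even (G : GameGraph V) (π : ℕ → V) (h : ∀ i, G.E (π i) (π (i + 1))) (i : ℕ) :
    G.liftPlay π h (2 * i) = Sum.inl (π i) := by
  simp [liftPlay]

theorem liftPlay_odd (G : GameGraph V) (π : ℕ → V) (h : ∀ i, G.E (π i) (π (i + 1))) (i : ℕ) :
    G.liftPlay π h (2 * i + 1) = Sum.inr ⟨(π i, π (i + 1)), h i⟩ := by
  have h2 : (2 * i + 1) / 2 = i := by omega
  have h3 : ¬ (2 * i + 1) % 2 = 0 := by omega
  simp only [liftPlay, if_neg h3, h2]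

theorem liftPlay_isPlay (G : GameGraph V) (π : ℕ → V) (hπ : G.IsPlay π) :
    G.subdivide.IsPlay (G.liftPlay π hπ.2) := by
  refine ⟨?_, fun n => ?_⟩
  · exact (G.liftPlay_even π hπ.2 0).trans (congrArg Sum.inl hπ.1)
  · obtain ⟨i, rfl | rfl⟩ := Nat.even_or_odd' n
    · rw [liftPlay_even, liftPlay_odd]
      exact Or.inl ⟨_, rfl, rfl⟩
    · rw [liftPlay_odd, show 2 * i + 1 + 1 = 2 * (i + 1) by ring, liftPlay_even]
      exact Or.inr ⟨_, rfl, rfl⟩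

/-- Every play of the subdivided graph is the lift of a play of the original graph. -/
theorem exists_eq_liftPlay (G : GameGraph V) (ρ : ℕ → V ⊕ {e : V × V // G.E e.1 e.2})
    (hρ : G.subdivide.IsPlay ρ) :
    ∃ (π : ℕ → V) (hπ : G.IsPlay π), ρ = G.liftPlay π hπ.2 := by
  have step : ∀ i v, ρ (2 * i) = Sum.inl v →
      ∃ e : {e : V × V // G.E e.1 e.2}, e.1.1 = v ∧ ρ (2 * i + 1) = Sum.inr e ∧
        ρ (2 * (i + 1)) = Sum.inl e.1.2 := by
    intro i v hv
    rcases hρ.2 (2 * i) with ⟨e, h1, h2⟩ | ⟨e, h1, h2⟩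
    · refine ⟨e, ?_, h2, ?_⟩
      · rw [hv] at h1
        exact (Sum.inl.inj h1).symm
      · rcases hρ.2 (2 * i + 1) with ⟨e', h3, h4⟩ | ⟨e', h3, h4⟩
        · rw [h2] at h3
          cases h3
        · rw [h2] at h3
          rw [Sum.inr.inj h3]
          exact h4
    · rw [hv] at h1
      cases h1
  have hex : ∀ i, ∃ v, ρ (2 * i) = Sum.inl v := by
    intro i
    induction i with
    | zero => exact ⟨_, hρ.1⟩
    | succ i ih =>
      obtain ⟨v, hv⟩ := ih
      obtain ⟨e, -, -, h⟩ := step i v hv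
      exact ⟨_, h⟩
  choose π hπ using hex
  have hodd : ∀ i, ∃ h : G.E (π i) (π (i + 1)),
      ρ (2 * i + 1) = Sum.inr ⟨(π i, π (i + 1)), h⟩ := by
    intro i
    obtain ⟨⟨⟨u, v⟩, he⟩, h1, h2, h3⟩ := step i _ (hπ i)
    rw [hπ (i + 1)] at h3
    have h4 : π (i + 1) = v := Sum.inl.inj h3
    dsimp only at h1
    subst h1 h4
    exact ⟨he, h2⟩
  refine ⟨π, ⟨Sum.inl.inj ((hπ 0).symm.trans hρ.1), fun i => (hodd i).1⟩, ?_⟩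
  funext n
  obtain ⟨i, rfl | rfl⟩ := Nat.even_or_odd' n
  · rw [liftPlay_even, hπ]
  · rw [liftPlay_odd]
    exact (hodd i).2

/-- A play satisfies the interval liminf objective iff its lift satisfies the parity
objective: if `m` is the liminf of the weights, then by monotonicity of `OmegaI` the least
priority seen infinitely often on the lift is `OmegaI m`, and this is even iff `m ∈ I`. -/
theorem win_iff_parityWin_liftPlay [Fintype V] (G : GameGraph V) (r : ℕ)
    (lo hi : Fin r → ℤ) (hne : ∀ i, lo i ≤ hi i)
    (hord : ∀ i j : Fin r, i < j → hi i < lo j)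
    (π : ℕ → V) (h : ∀ i, G.E (π i) (π (i + 1))) :
    (∃ m : ℤ, m ∈ (⋃ i : Fin r, Set.Icc (lo i) (hi i)) ∧
        G.liminfPayoff π = ((m : ℝ) : EReal)) ↔
      ParityWin (subdivPriority G r lo hi) (G.liftPlay π h) := by
  have hfin : (Set.range fun i => G.w (π i) (π (i + 1))).Finite :=
    (Set.finite_range fun p : V × V => G.w p.1 p.2).subset (by
      rintro _ ⟨i, rfl⟩
      exact ⟨(π i, π (i + 1)), rfl⟩)
  obtain ⟨m, hm, hle⟩ := exists_freq_min _ hfin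
  have hlim : G.liminfPayoff π = ((m : ℝ) : EReal) := liminf_eq_of_freq_min _ m hm hle
  have hleft : (∃ m : ℤ, m ∈ (⋃ i : Fin r, Set.Icc (lo i) (hi i)) ∧
      G.liminfPayoff π = ((m : ℝ) : EReal)) ↔ Even (OmegaI r lo hi m) := by
    rw [even_OmegaI_iff, hlim]
    constructor
    · rintro ⟨m', hm', heq⟩
      have : m = m' := by exact_mod_cast heq
      subst this
      simpa using hm'
    · exact fun hm' => ⟨m, by simpa using hm', rfl⟩
  rw [hleft]
  have hfreq : ∀ N, ∃ k, N ≤ k ∧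
      subdivPriority G r lo hi (G.liftPlay π h k) = OmegaI r lo hi m := by
    intro N
    obtain ⟨k, hk, hkm⟩ := frequently_atTop.1 hm N
    refine ⟨2 * k + 1, by omega, ?_⟩
    rw [liftPlay_odd, ← hkm]
    rfl
  have hmin : ∀ q, (∀ N, ∃ k, N ≤ k ∧ subdivPriority G r lo hi (G.liftPlay π h k) = q) →
      OmegaI r lo hi m ≤ q := by
    intro q hq
    obtain ⟨N, hN⟩ := eventually_atTop.1 hle
    obtain ⟨k, hk, rfl⟩ := hq (2 * N)
    obtain ⟨i, rfl | rfl⟩ := Nat.even_or_odd' k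
    · rw [liftPlay_even]
      exact OmegaI_le r lo hi m
    · rw [liftPlay_odd]
      exact OmegaI_mono r lo hi hne hord (hN i (by omega))
  constructor
  · exact fun he => ⟨_, he, hfreq, hmin⟩
  · rintro ⟨p, he, hp, hpmin⟩
    rwa [← le_antisymm (hpmin _ hfreq) (hmin p hp)]

/-! ### Translating histories and strategies -/

theorem prefixList_succ {W : Type} (π : ℕ → W) (i : ℕ) :
    prefixList π (i + 1) = prefixList π i ++ [π (i + 1)] := by
  rw [prefixList, List.ofFn_succ_last]
  rfl

theorem prefixList_zero {W : Type} (π : ℕ → W) : prefixList π 0 = [π 0] := by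
  simp [prefixList]

theorem prefixList_liftPlay_succ (G : GameGraph V) (π : ℕ → V)
    (h : ∀ i, G.E (π i) (π (i + 1))) (i : ℕ) :
    prefixList (G.liftPlay π h) (2 * (i + 1)) = prefixList (G.liftPlay π h) (2 * i) ++
      [Sum.inr ⟨(π i, π (i + 1)), h i⟩, Sum.inl (π (i + 1))] := by
  rw [show 2 * (i + 1) = 2 * i + 1 + 1 by ring, prefixList_succ, prefixList_succ, liftPlay_odd,
    show 2 * i + 1 + 1 = 2 * (i + 1) by ring, liftPlay_even]
  simp

/-- The history in `G` underlying a history of `G.subdivide`: subdivision vertices are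
deleted. -/
def projHist (G : GameGraph V) (l : List (V ⊕ {e : V × V // G.E e.1 e.2})) : List V :=
  l.filterMap Sum.getLeft?

theorem projHist_prefixList (G : GameGraph V) (π : ℕ → V)
    (h : ∀ i, G.E (π i) (π (i + 1))) (i : ℕ) :
    G.projHist (prefixList (G.liftPlay π h) (2 * i)) = prefixList π i := by
  induction i with
  | zero =>
    rw [Nat.mul_zero, prefixList_zero, prefixList_zero, show 0 = 2 * 0 from rfl, liftPlay_even]
    rfl
  | succ i ih =>
    rw [prefixList_liftPlay_succ, prefixList_succ, ← ih, projHist, List.filterMap_append]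
    rfl

open scoped Classical in
/-- The subdivision vertex between `u` and `v`, with a dummy value when `(u, v)` is not an
edge. -/
noncomputable def midVertex (G : GameGraph V) (u v : V) : V ⊕ {e : V × V // G.E e.1 e.2} :=
  if h : G.E u v then Sum.inr ⟨(u, v), h⟩ else Sum.inl u

/-- The history of `G.subdivide` obtained by inserting subdivision vertices into a history
of `G`. -/
noncomputable def liftHist (G : GameGraph V) : List V → List (V ⊕ {e : V × V // G.E e.1 e.2})
  | [] => []
  | [v] => [Sum.inl v]
  | u :: v :: l => Sum.inl u :: G.midVertex u v :: liftHist G (v :: l)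

theorem liftHist_append (G : GameGraph V) (l : List V) (u v : V) :
    G.liftHist (l ++ [u] ++ [v]) =
      G.liftHist (l ++ [u]) ++ [G.midVertex u v, Sum.inl v] := by
  induction l with
  | nil => simp [liftHist]
  | cons a l ih =>
    cases l with
    | nil => simp [liftHist]
    | cons b l => simpa [liftHist] using ih

theorem exists_liftHist_eq (G : GameGraph V) (l : List V) (v : V) :
    ∃ l', G.liftHist (l ++ [v]) = l' ++ [Sum.inl v] := by
  rcases List.eq_nil_or_concat l with rfl | ⟨l, u, rfl⟩
  · exact ⟨[], rfl⟩
  · refine ⟨G.liftHist (l ++ [u]) ++ [G.midVertex u v], ?_⟩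
    rw [List.concat_eq_append, liftHist_append]
    simp

theorem exists_prefixList_eq {W : Type} (π : ℕ → W) (i : ℕ) :
    ∃ l, prefixList π i = l ++ [π i] := by
  cases i with
  | zero => exact ⟨[], prefixList_zero π⟩
  | succ i => exact ⟨_, prefixList_succ π i⟩

theorem liftHist_prefixList (G : GameGraph V) (π : ℕ → V)
    (h : ∀ i, G.E (π i) (π (i + 1))) (i : ℕ) :
    G.liftHist (prefixList π i) = prefixList (G.liftPlay π h) (2 * i) := by
  induction i with
  | zero =>
    rw [Nat.mul_zero, prefixList_zero, prefixList_zero, show 0 = 2 * 0 from rfl, liftPlay_even]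
    rfl
  | succ i ih =>
    obtain ⟨l, hl⟩ := exists_prefixList_eq π i
    rw [prefixList_liftPlay_succ, prefixList_succ, ← ih, hl, liftHist_append]
    simp [midVertex, h i]

/-- Eve's strategy on `G.subdivide` imitating a strategy `σ` on `G`: at an original vertex
`v` it moves to the subdivision vertex of the edge chosen by `σ`. Elsewhere the value is a
dummy. -/
noncomputable def liftStrat (G : GameGraph V) (σ : List V → V)
    (l : List (V ⊕ {e : V × V // G.E e.1 e.2})) : V ⊕ {e : V × V // G.E e.1 e.2} :=
  match l.getLast? with
  | some (Sum.inl v) => G.midVertex v (σ (G.projHist l))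
  | _ => Sum.inl G.init

theorem liftStrat_append (G : GameGraph V) (σ : List V → V)
    (l : List (V ⊕ {e : V × V // G.E e.1 e.2})) (v : V) :
    G.liftStrat σ (l ++ [Sum.inl v]) =
      G.midVertex v (σ (G.projHist (l ++ [Sum.inl v]))) := by
  simp [liftStrat]

/-- Eve's strategy on `G` imitating a strategy `τ` on `G.subdivide`: it moves along the edge
whose subdivision vertex `τ` chooses. -/
noncomputable def projStrat (G : GameGraph V)
    (τ : List (V ⊕ {e : V × V // G.E e.1 e.2}) → V ⊕ {e : V × V // G.E e.1 e.2})
    (l : List V) : V :=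
  Sum.elim id (fun e => e.1.2) (τ (G.liftHist l))

theorem eveWins_subdivide_of_eveWins (G : GameGraph V) (Win : (ℕ → V) → Prop)
    (Win' : (ℕ → V ⊕ {e : V × V // G.E e.1 e.2}) → Prop)
    (hWin : ∀ π (h : ∀ i, G.E (π i) (π (i + 1))), Win π → Win' (G.liftPlay π h))
    (hG : G.EveWins Win) : G.subdivide.EveWins Win' := by
  obtain ⟨σ, hσ, hwin⟩ := hG
  refine ⟨G.liftStrat σ, ?_, ?_⟩
  · rintro l _ ⟨v, hv, rfl⟩
    rw [liftStrat_append]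
    have hE : G.E v (σ (G.projHist (l ++ [Sum.inl v]))) := by
      have := hσ (G.projHist l) v hv
      simpa [projHist] using this
    rw [midVertex, dif_pos hE]
    exact Or.inl ⟨_, rfl, rfl⟩
  · intro ρ hρ hcons
    obtain ⟨π, hπ, rfl⟩ := G.exists_eq_liftPlay ρ hρ
    refine hWin π hπ.2 (hwin π hπ fun i hi => ?_)
    have hmem : G.liftPlay π hπ.2 (2 * i) ∈ G.subdivide.Eve := by
      rw [liftPlay_even]
      exact ⟨_, hi, rfl⟩
    have hc := hcons (2 * i) hmem
    obtain ⟨l, hl⟩ := exists_prefixList_eq (G.liftPlay π hπ.2) (2 * i)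
    rw [liftPlay_even] at hl
    rw [liftPlay_odd, hl, liftStrat_append, ← hl, projHist_prefixList, midVertex] at hc
    split_ifs at hc with hE
    exact congrArg (fun e => e.1.2) (Sum.inr.inj hc)

theorem eveWins_of_eveWins_subdivide (G : GameGraph V) (Win : (ℕ → V) → Prop)
    (Win' : (ℕ → V ⊕ {e : V × V // G.E e.1 e.2}) → Prop)
    (hWin : ∀ π (h : ∀ i, G.E (π i) (π (i + 1))), Win' (G.liftPlay π h) → Win π)
    (hG : G.subdivide.EveWins Win') : G.EveWins Win := by
  obtain ⟨τ, hτ, hwin⟩ := hG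
  -- At an Eve vertex `v`, legality forces `τ` to choose the subdivision vertex of an edge
  -- leaving `v`, namely the one leading to the vertex chosen by `projStrat`.
  have key : ∀ l v, v ∈ G.Eve → ∃ h : G.E v (G.projStrat τ (l ++ [v])),
      τ (G.liftHist (l ++ [v])) = Sum.inr ⟨(v, G.projStrat τ (l ++ [v])), h⟩ := by
    intro l v hv
    obtain ⟨l', hl'⟩ := G.exists_liftHist_eq l v
    rcases hτ l' (Sum.inl v) ⟨v, hv, rfl⟩ with ⟨⟨⟨u, u'⟩, he⟩, h1, h2⟩ | ⟨e, h1, -⟩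
    · have h1 := Sum.inl.inj h1
      dsimp only at h1 he
      subst h1
      have hp : G.projStrat τ (l ++ [v]) = u' := by
        rw [projStrat, hl', h2]
        rfl
      subst hp
      exact ⟨he, by rw [hl', h2]⟩
    · cases h1
  refine ⟨G.projStrat τ, fun l v hv => (key l v hv).1, fun π hπ hcons => ?_⟩
  refine hWin π hπ.2 (hwin _ (G.liftPlay_isPlay π hπ) fun n hn => ?_)
  obtain ⟨i, rfl | rfl⟩ := Nat.even_or_odd' n
  · rw [liftPlay_even] at hn
    obtain ⟨v, hv, hvi⟩ := hn
    have hvi := Sum.inl.inj hvi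
    subst hvi
    obtain ⟨l, hl⟩ := exists_prefixList_eq π i
    obtain ⟨h1, h2⟩ := key l (π i) hv
    have hc := hcons i hv
    rw [← liftHist_prefixList, hl, h2, liftPlay_odd]
    congr 3
    rw [hc, hl]
  · rw [liftPlay_odd] at hn
    obtain ⟨v, -, hv⟩ := hn
    cases hv

end GameGraph

/-- Eve wins the interval liminf game `(G, I)`, where
`I = I_1 ∪ ⋯ ∪ I_r` is a finite union of nonempty bounded closed integer intervals
with `sup I_i < inf I_{i+1}`, iff she wins the parity game obtained by subdividing
every edge `e` with a vertex of priority `Ω_I(w(e))` and giving every original vertex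
priority `2r+1`. -/
theorem stmt0 {V : Type} [Fintype V] (G : GameGraph V) (r : ℕ) (hr : 0 < r)
    (lo hi : Fin r → ℤ) (hne : ∀ i, lo i ≤ hi i)
    (hord : ∀ i j : Fin r, i < j → hi i < lo j)
    (I : Set ℤ) (hI : I = ⋃ i : Fin r, Set.Icc (lo i) (hi i)) :
    G.EveWins (fun π => ∃ m : ℤ, m ∈ I ∧ G.liminfPayoff π = ((m : ℝ) : EReal)) ↔
      (G.subdivide).EveWins (GameGraph.ParityWin (subdivPriority G r lo hi)) := by
  subst hI
  have hWin := fun π h => G.win_iff_parityWin_liftPlay r lo hi hne hord π h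
  exact ⟨G.eveWins_subdivide_of_eveWins _ _ fun π h => (hWin π h).1,
    G.eveWins_of_eveWins_subdivide _ _ fun π h => (hWin π h).2⟩
end

section
/- In every interval liminf game (G, I), where I is a finite union of integer intervals, positional strategies suffice: if Eve has a winning strategy then she has a positional winning strategy, and if Adam has a winning strategy then he has a positional winning strategy. -/
/-!
The liminf of a play on a finite graph is the least weight seen infinitely often, so an interval
liminf game is a min-parity game with priorities on the edges, in which a weight is winning for Eve
exactly when it lies in `I`. The theorem then follows from
positional determinacy of such games (`LiminfGame.positional_determinacy`): one of the players has
a positional winning strategy, and it cannot be the opponent of a player who has a winning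
strategy, since the two strategies could be played against each other (`not_both_win`).

Positional determinacy is Zielonka's argument, run by induction on the set of edges. Let `p` be the
least weight of an edge, `b` the player who profits from `p`, and `A` the set of vertices from which
`b` can force an edge of weight `p`. Remove `A` and all edges of weight `p` and solve the remaining
game. If `b` wins everywhere there, then `b` wins everywhere: a play either sees `p` infinitely
often or is eventually a play of the smaller game. Otherwise the opponent `c` wins on a nonempty
set `Z` of the smaller game, hence also in the whole game since `b` cannot leave `Z`. Remove the
set `B` from which `c` can force a visit to `Z`, and solve the rest; the solutions combine.
-/

open Filter

namespace LiminfGame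

/-! ### Limits of weight sequences -/

/-- `m` is the least value that the weight takes infinitely often along `π`. -/
def IsLim {V : Type} (w : V → V → ℤ) (π : ℕ → V) (m : ℤ) : Prop :=
  (∀ N, ∃ k, N ≤ k ∧ w (π k) (π (k + 1)) = m) ∧ ∃ N, ∀ k, N ≤ k → m ≤ w (π k) (π (k + 1))

theorem IsLim.shift {V : Type} {w : V → V → ℤ} {π : ℕ → V} {m : ℤ} (h : IsLim w π m) (n : ℕ) :
    IsLim w (fun i => π (n + i)) m := by
  obtain ⟨h1, N, h2⟩ := h
  refine ⟨fun M => ?_, N, fun k hk => ?_⟩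
  · obtain ⟨k, hk, hw⟩ := h1 (n + M)
    refine ⟨k - n, by omega, ?_⟩
    have e1 : n + (k - n) = k := by omega
    have e2 : n + (k - n + 1) = k + 1 := by omega
    simp only [e1, e2, hw]
  · exact h2 (n + k) (by omega)

theorem exists_isLim {V : Type} [Finite V] (w : V → V → ℤ) (π : ℕ → V) : ∃ m, IsLim w π m := by
  classical
  have hfin : (Set.range fun i => w (π i) (π (i + 1))).Finite :=
    (Set.finite_range fun p : V × V => w p.1 p.2).subset (by
      rintro _ ⟨i, rfl⟩
      exact ⟨(π i, π (i + 1)), rfl⟩)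
  let S : Set ℤ := {m | ∀ N, ∃ k, N ≤ k ∧ w (π k) (π (k + 1)) = m}
  have hS : S.Finite := hfin.subset (by
    intro m hm
    obtain ⟨k, -, hk⟩ := hm 0
    exact ⟨k, hk⟩)
  -- Beyond some index only the values occurring infinitely often remain.
  have hev : ∃ N, ∀ k, N ≤ k → w (π k) (π (k + 1)) ∈ S := by
    have key : ∀ m ∈ (Set.range fun i => w (π i) (π (i + 1))),
        ∀ᶠ k in Filter.atTop, m ∉ S → w (π k) (π (k + 1)) ≠ m := by
      intro m _
      by_cases hm : m ∈ S
      · exact Filter.Eventually.of_forall fun k h => absurd hm h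
      · have : ∃ N, ∀ k, N ≤ k → w (π k) (π (k + 1)) ≠ m := by
          by_contra hcon
          push Not at hcon
          exact hm hcon
        obtain ⟨N, hN⟩ := this
        exact Filter.eventually_atTop.2 ⟨N, fun k hk _ => hN k hk⟩
    obtain ⟨N, hN⟩ := Filter.eventually_atTop.1 ((Filter.eventually_all_finite hfin).2 key)
    refine ⟨N, fun k hk => ?_⟩
    by_contra hcon
    exact hN k hk _ ⟨k, rfl⟩ hcon rfl
  obtain ⟨N, hN⟩ := hev
  obtain ⟨m, hmS, hmin⟩ := Set.exists_min_image S id hS ⟨_, hN N le_rfl⟩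
  exact ⟨m, hmS, N, fun k hk => hmin _ (hN k hk)⟩

theorem IsLim.liminf_eq {V : Type} {G : GameGraph V} {π : ℕ → V} {m : ℤ} (h : IsLim G.w π m) :
    G.liminfPayoff π = ((m : ℝ) : EReal) := by
  obtain ⟨h1, N, h2⟩ := h
  unfold GameGraph.liminfPayoff
  apply le_antisymm
  · refine Filter.liminf_le_of_frequently_le' (Filter.frequently_atTop.2 fun M => ?_)
    obtain ⟨k, hk, hw⟩ := h1 M
    exact ⟨k, hk, by rw [hw]⟩
  · refine Filter.le_liminf_of_le (by isBoundedDefault) (Filter.eventually_atTop.2 ⟨N, fun k hk => ?_⟩)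
    have := h2 k hk
    exact_mod_cast this

/-! ### Attractors -/

/-- Attractor of player `b` to a set `T` of edges: `A` is the set of vertices from which `b` can
force an edge of `T`, by the positional strategy `g`, which decreases `rk` until this happens. -/
theorem exists_attractor {V : Type} [Finite V] (own : V → Bool) (R T : V → V → Prop) (b : Bool) :
    ∃ (A : Set V) (rk : V → ℕ) (g : V → V),
      (∀ v ∈ A, ∃ u, R v u) ∧
      (∀ v ∈ A, own v = b → R v (g v) ∧ (T v (g v) ∨ g v ∈ A ∧ rk (g v) < rk v)) ∧
      (∀ v ∈ A, own v ≠ b → ∀ u, R v u → T v u ∨ u ∈ A ∧ rk u < rk v) ∧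
      (∀ v ∉ A, own v = b → ∀ u, R v u → ¬ T v u ∧ u ∉ A) ∧
      (∀ v ∉ A, own v ≠ b → (∃ u, R v u) → ∃ u, R v u ∧ ¬ T v u ∧ u ∉ A) := by
  classical
  let step : Set V → Set V := fun X => {v | (∃ u, R v u) ∧
    (own v = b → ∃ u, R v u ∧ (T v u ∨ u ∈ X)) ∧ (own v ≠ b → ∀ u, R v u → T v u ∨ u ∈ X)}
  have hstep : Monotone step := by
    intro X Y hXY v ⟨h0, h1, h2⟩
    refine ⟨h0, fun h => ?_, fun h u hu => (h2 h u hu).imp_right fun h => hXY h⟩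
    obtain ⟨u, hu, h3⟩ := h1 h
    exact ⟨u, hu, h3.imp_right fun h => hXY h⟩
  let X : ℕ → Set V := fun n => step^[n] ∅
  have hXs : ∀ n, X (n + 1) = step (X n) := fun n => Function.iterate_succ_apply' step n ∅
  have hX : Monotone X := by
    refine monotone_nat_of_le_succ fun n => ?_
    induction n with
    | zero => exact Set.empty_subset _
    | succ n ih => rw [hXs n, hXs (n + 1)]; exact hstep ih
  obtain ⟨N, hN⟩ := WellFoundedGT.monotone_chain_condition ⟨X, hX⟩
  have hfix : X N = step (X N) := by
    rw [← hXs]; exact hN (N + 1) (Nat.le_succ N)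
  have hsub : ∀ n, X n ⊆ X N := by
    intro n
    rcases le_total n N with h | h
    · exact hX h
    · exact (hN n h).ge
  let rk : V → ℕ := fun v => sInf {n | v ∈ X n}
  -- A vertex of rank `n + 1` enters at stage `n + 1` thanks to vertices of rank at most `n`.
  have hrk : ∀ v ∈ X N, v ∈ step {u | u ∈ X N ∧ rk u < rk v} := by
    intro v hv
    have hmem : v ∈ X (rk v) := Nat.sInf_mem (s := {n | v ∈ X n}) ⟨N, hv⟩
    rcases hr : rk v with _ | n
    · rw [hr] at hmem
      exact absurd hmem (Set.notMem_empty v)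
    · rw [hr, hXs] at hmem
      refine hstep ?_ hmem
      intro u hu
      exact ⟨hsub n hu, Nat.lt_succ_of_le (Nat.sInf_le hu)⟩
  have hg : ∀ v, ∃ u, v ∈ X N → own v = b → R v u ∧ (T v u ∨ u ∈ X N ∧ rk u < rk v) := by
    intro v
    by_cases hv : v ∈ X N ∧ own v = b
    · obtain ⟨u, hu⟩ := (hrk v hv.1).2.1 hv.2
      exact ⟨u, fun _ _ => hu⟩
    · exact ⟨v, fun h1 h2 => absurd ⟨h1, h2⟩ hv⟩
  choose g hg using hg
  refine ⟨X N, rk, g, fun v hv => (hrk v hv).1, fun v => hg v, fun v hv => (hrk v hv).2.2, ?_, ?_⟩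
  · intro v hv hb u hu
    by_contra hcon
    apply hv
    rw [hfix]
    exact ⟨⟨u, hu⟩, fun _ => ⟨u, hu, by tauto⟩, fun h => absurd hb h⟩
  · intro v hv hb hex
    by_contra hcon
    push Not at hcon
    apply hv
    rw [hfix]
    refine ⟨hex, fun h => absurd h hb, fun _ u hu => ?_⟩
    by_cases hT : T v u
    · exact Or.inl hT
    · exact Or.inr (hcon u hu hT)

theorem exists_of_descent {P Q : ℕ → Prop} {rk : ℕ → ℕ}
    (h : ∀ n, P n → Q n ∨ P (n + 1) ∧ rk (n + 1) < rk n) {n : ℕ} (hn : P n) :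
    ∃ k, n ≤ k ∧ Q k := by
  induction hr : rk n using Nat.strong_induction_on generalizing n with
  | _ r ih =>
    rcases h n hn with hq | ⟨hp, hlt⟩
    · exact ⟨n, le_rfl, hq⟩
    · obtain ⟨k, hk, hq⟩ := ih _ (hr ▸ hlt) hp rfl
      exact ⟨k, by omega, hq⟩

/-! ### Positional determinacy -/

/-- A positional solution of the game with edges `R`, owners `own`, and weight `m` winning for
`good m`: `W v` is the winner from `v` and `f` is a strategy for each player on their own winning
region. Vertices without outgoing edges are not part of the game. -/
structure Solves {V : Type} (own : V → Bool) (w : V → V → ℤ) (good : ℤ → Bool)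
    (R : V → V → Prop) (W : V → Bool) (f : V → V) : Prop where
  move : ∀ v, (∃ u, R v u) → own v = W v → R v (f v) ∧ W (f v) = W v
  trap : ∀ v u, own v ≠ W v → R v u → W u = W v
  win : ∀ π : ℕ → V, (∀ i, R (π i) (π (i + 1))) →
    (∀ i, W (π i) = W (π 0)) →
    (∀ i, own (π i) = W (π i) → π (i + 1) = f (π i)) →
    ∀ m, IsLim w π m → good m = W (π 0)

/-- Positional determinacy, for every set `R` of edges without dead ends: the induction passes to
smaller sets of edges on the same vertices. -/
theorem positional_determinacy {V : Type} [Finite V] (own : V → Bool) (w : V → V → ℤ)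
    (good : ℤ → Bool) (R : V → V → Prop) (hR : ∀ v u, R v u → ∃ t, R u t) :
    ∃ W f, Solves own w good R W f := by
  classical
  induction R using WellFoundedLT.induction with
  | _ R ih =>
  by_cases hne : ∃ v u, R v u
  swap
  · push Not at hne
    exact ⟨fun _ => true, id, fun v ⟨u, h⟩ => absurd h (hne v u), fun v u _ h => absurd h (hne v u),
      fun π h => absurd (h 0) (hne _ _)⟩
  -- An edge of minimal weight `p`.
  obtain ⟨⟨x, y⟩, hxy, hmin⟩ := Set.exists_min_image {e : V × V | R e.1 e.2} (fun e => w e.1 e.2)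
    (Set.toFinite _) (by obtain ⟨v, u, h⟩ := hne; exact ⟨(v, u), h⟩)
  have hxy : R x y := hxy
  set p := w x y with hp
  have hmin : ∀ v u, R v u → p ≤ w v u := fun v u h => hmin (v, u) h
  set b := good p with hb
  obtain ⟨A, rk, g, A0, A1, A2, A3, A4⟩ := exists_attractor own R (fun v u => w v u = p) b
  let R' : V → V → Prop := fun v u => R v u ∧ v ∉ A ∧ u ∉ A ∧ w v u ≠ p
  have hlt' : R' < R := by
    refine lt_of_le_of_ne (fun v u h => h.1) fun h => ?_
    have : R' x y := h ▸ hxy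
    exact this.2.2.2 rfl
  have alive' : ∀ v, v ∉ A → (∃ u, R v u) → ∃ u, R' v u := by
    rintro v hv ⟨u, hu⟩
    by_cases ho : own v = b
    · exact ⟨u, hu, hv, (A3 v hv ho u hu).2, (A3 v hv ho u hu).1⟩
    · obtain ⟨t, ht, h1, h2⟩ := A4 v hv ho ⟨u, hu⟩
      exact ⟨t, ht, hv, h2, h1⟩
  have hR' : ∀ v u, R' v u → ∃ t, R' u t := fun v u h => alive' u h.2.2.1 (hR v u h.1)
  obtain ⟨W', f', S'⟩ := ih R' hlt' hR'
  by_cases hall : ∀ v, (∃ u, R' v u) → W' v = b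
  -- `b` wins everywhere.
  · refine ⟨fun _ => b, fun v => if v ∈ A then g v else f' v, ?_, fun _ _ _ _ => rfl, ?_⟩
    · intro v hv ho
      by_cases hA : v ∈ A
      · simpa [hA] using (A1 v hA ho).1
      · have ha := alive' v hA hv
        simpa [hA] using (S'.move v ha (ho.trans (hall v ha).symm)).1.1
    · intro π hπ _ hf m hm
      by_cases hinf : ∀ N, ∃ k, N ≤ k ∧ w (π k) (π (k + 1)) = p
      · obtain ⟨N, hN⟩ := hm.2
        obtain ⟨k, hk, hkp⟩ := hinf N
        obtain ⟨j, -, hj⟩ := hm.1 0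
        have h1 := hN k hk
        have h2 := hmin _ _ (hπ j)
        have : m = p := by omega
        rw [this]
      · push Not at hinf
        obtain ⟨N, hN⟩ := hinf
        have hA : ∀ k, N ≤ k → π k ∉ A := by
          intro k hk hkA
          obtain ⟨j, hj, hj'⟩ := exists_of_descent (P := fun n => π n ∈ A)
            (Q := fun n => w (π n) (π (n + 1)) = p) (rk := fun n => rk (π n)) (by
              intro n hn
              by_cases ho : own (π n) = b
              · have := hf n ho
                simp only [hn, if_true] at this
                rw [this]
                exact (A1 _ hn ho).2
              · exact A2 _ hn ho _ (hπ n)) hkA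
          exact hN j (by omega) hj'
        have hπ' : ∀ i, R' (π (N + i)) (π (N + (i + 1))) := fun i =>
          ⟨hπ _, hA _ (by omega), hA _ (by omega), hN _ (by omega)⟩
        have hW : ∀ i, W' (π (N + i)) = b := fun i => hall _ ⟨_, hπ' i⟩
        have := S'.win (fun i => π (N + i)) hπ' (fun i => (hW i).trans (hW 0).symm) (by
          intro i ho
          have h := hf (N + i) (ho.trans (hW i))
          simp only [hA (N + i) (by omega), if_false] at h
          exact h) m (hm.shift N)
        exact this.trans (hW 0)
  · push Not at hall
    obtain ⟨z, hz, hzb⟩ := hall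
    -- `c` is the opponent of `b`.
    obtain ⟨c, hcb⟩ : ∃ c, c = !b := ⟨_, rfl⟩
    have hc : ∀ d : Bool, d ≠ b ↔ d = c := by subst hcb; intro d; cases d <;> cases b <;> simp
    have hc' : ∀ d : Bool, d ≠ c ↔ d = b := by subst hcb; intro d; cases d <;> cases b <;> simp
    let Z : Set V := {v | (∃ u, R' v u) ∧ W' v = c}
    have hzZ : z ∈ Z := ⟨hz, (hc _).1 hzb⟩
    -- The target consists of the edges that start in `Z`, so that `Z` is part of its attractor.
    obtain ⟨B, rk2, g2, B0, B1, B2, B3, B4⟩ := exists_attractor own R (fun v _ => v ∈ Z) c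
    have hRZ : ∀ v ∈ Z, ∃ u, R v u := fun v ⟨⟨u, hu⟩, _⟩ => ⟨u, hu.1⟩
    have hZB : Z ⊆ B := by
      intro v hv
      by_contra hvB
      obtain ⟨u, hu⟩ := hRZ v hv
      by_cases ho : own v = c
      · exact (B3 v hvB ho u hu).1 hv
      · obtain ⟨t, -, h, -⟩ := B4 v hvB ho ⟨u, hu⟩
        exact h hv
    let R2 : V → V → Prop := fun v u => R v u ∧ v ∉ B ∧ u ∉ B
    have hlt2 : R2 < R := by
      refine lt_of_le_of_ne (fun v u h => h.1) fun h => ?_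
      obtain ⟨u, hu⟩ := hRZ z hzZ
      have : R2 z u := h ▸ hu
      exact this.2.1 (hZB hzZ)
    have alive2 : ∀ v, v ∉ B → (∃ u, R v u) → ∃ u, R2 v u := by
      rintro v hv ⟨u, hu⟩
      by_cases ho : own v = c
      · exact ⟨u, hu, hv, (B3 v hv ho u hu).2⟩
      · obtain ⟨t, ht, -, h2⟩ := B4 v hv ho ⟨u, hu⟩
        exact ⟨t, ht, hv, h2⟩
    obtain ⟨W2, f2, S2⟩ := ih R2 hlt2 fun v u h => alive2 u h.2.2 (hR v u h.1)
    -- `b` can leave `Z` neither towards `A` nor by an edge of weight `p`.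
    have hZb : ∀ v ∈ Z, own v ≠ c → ∀ u, R v u → R' v u ∧ u ∈ Z := by
      rintro v ⟨⟨t, ht⟩, hW⟩ ho u hu
      have h3 := A3 v ht.2.1 ((hc' _).1 ho) u hu
      have hR'u : R' v u := ⟨hu, ht.2.1, h3.2, h3.1⟩
      exact ⟨hR'u, hR' _ _ hR'u, (S'.trap v u (by rw [hW]; exact ho) hR'u).trans hW⟩
    have hZc : ∀ v ∈ Z, own v = c → R' v (f' v) ∧ f' v ∈ Z := by
      rintro v ⟨ha, hW⟩ ho
      have h := S'.move v ha (ho.trans hW.symm)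
      exact ⟨h.1, hR' _ _ h.1, h.2.trans hW⟩
    let W : V → Bool := fun v => if v ∈ B then c else W2 v
    let f : V → V := fun v => if v ∈ Z then f' v else if v ∈ B then g2 v else f2 v
    have WB : ∀ v, v ∈ B → W v = c := fun v h => if_pos h
    have WnB : ∀ v, v ∉ B → W v = W2 v := fun v h => if_neg h
    have fZ : ∀ v, v ∈ Z → f v = f' v := fun v h => if_pos h
    have fB : ∀ v, v ∉ Z → v ∈ B → f v = g2 v := fun v h h2 => (if_neg h).trans (if_pos h2)
    have fnB : ∀ v, v ∉ B → f v = f2 v := fun v h =>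
      (if_neg fun h2 => h (hZB h2)).trans (if_neg h)
    refine ⟨W, f, ?_, ?_, ?_⟩
    · intro v hv ho
      by_cases hZ : v ∈ Z
      · rw [WB v (hZB hZ)] at ho ⊢
        obtain ⟨h1, h2⟩ := hZc v hZ ho
        rw [fZ v hZ]
        exact ⟨h1.1, WB _ (hZB h2)⟩
      · by_cases hB : v ∈ B
        · rw [WB v hB] at ho ⊢
          obtain ⟨h1, h2⟩ := B1 v hB ho
          rw [fB v hZ hB]
          exact ⟨h1, WB _ (h2.resolve_left hZ).1⟩
        · rw [WnB v hB] at ho ⊢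
          obtain ⟨h1, h2⟩ := S2.move v (alive2 v hB hv) ho
          rw [fnB v hB]
          exact ⟨h1.1, (WnB _ h1.2.2).trans h2⟩
    · intro v u ho hu
      by_cases hZ : v ∈ Z
      · rw [WB v (hZB hZ)] at ho ⊢
        exact WB _ (hZB (hZb v hZ ho u hu).2)
      · by_cases hB : v ∈ B
        · rw [WB v hB] at ho ⊢
          exact WB _ ((B2 v hB ho u hu).resolve_left hZ).1
        · rw [WnB v hB] at ho ⊢
          by_cases huB : u ∈ B
          · rw [WB u huB]
            by_contra hcon
            have h1 : W2 v = b := (hc' _).1 (Ne.symm hcon)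
            exact (B3 v hB ((hc _).1 (h1 ▸ ho)) u hu).2 huB
          · rw [WnB u huB]
            exact S2.trap v u ho ⟨hu, hB, huB⟩
    · intro π hπ hconst hf m hm
      by_cases hB : ∃ n, π n ∈ B
      -- The play reaches `Z` and stays there, following `f'`.
      · obtain ⟨n, hn⟩ := hB
        have hWc : ∀ i, W (π i) = c := fun i =>
          (hconst i).trans ((hconst n).symm.trans (WB _ hn))
        obtain ⟨k, -, hk⟩ := exists_of_descent (P := fun n => π n ∈ B)
          (Q := fun n => π n ∈ Z) (rk := fun n => rk2 (π n)) (by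
            intro n hn
            by_cases hZ : π n ∈ Z
            · exact Or.inl hZ
            · by_cases ho : own (π n) = c
              · have := hf n (ho.trans (hWc n).symm)
                rw [fB _ hZ hn] at this
                rw [this]
                exact (B1 _ hn ho).2
              · exact B2 _ hn ho _ (hπ n)) hn
        have hnext : ∀ i, π i ∈ Z → R' (π i) (π (i + 1)) ∧ π (i + 1) ∈ Z := by
          intro i hi
          by_cases ho : own (π i) = c
          · rw [hf i (ho.trans (hWc i).symm), fZ _ hi]
            exact hZc _ hi ho
          · exact hZb _ hi ho _ (hπ i)
        have hZ : ∀ i, π (k + i) ∈ Z := by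
          intro i
          induction i with
          | zero => exact hk
          | succ i ihi => exact (hnext _ ihi).2
        have := S'.win (fun i => π (k + i)) (fun i => (hnext _ (hZ i)).1)
          (fun i => (hZ i).2.trans (hZ 0).2.symm) (by
            intro i ho
            have h := hf (k + i) (ho.trans ((hZ i).2.trans (hWc _).symm))
            rw [fZ _ (hZ i)] at h
            exact h) m (hm.shift k)
        exact this.trans ((hZ 0).2.trans (hWc 0).symm)
      · push Not at hB
        have hW : ∀ i, W (π i) = W2 (π i) := fun i => WnB _ (hB i)
        have := S2.win π (fun i => ⟨hπ i, hB i, hB (i + 1)⟩)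
          (fun i => by rw [← hW, ← hW]; exact hconst i) (by
            intro i ho
            rw [← fnB _ (hB i)]
            exact hf i (ho.trans (hW i).symm)) m hm
        exact this.trans (hW 0).symm

/-! ### Playing strategies against each other -/

theorem prefixList_succ {V : Type} (π : ℕ → V) (i : ℕ) :
    GameGraph.prefixList π (i + 1) = GameGraph.prefixList π i ++ [π (i + 1)] := by
  unfold GameGraph.prefixList
  rw [List.ofFn_succ_last]
  rfl

theorem prefixList_eq_append {V : Type} (π : ℕ → V) (i : ℕ) :
    ∃ l, GameGraph.prefixList π i = l ++ [π i] := by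
  cases i with
  | zero => exact ⟨[], by simp [GameGraph.prefixList]⟩
  | succ i => exact ⟨_, prefixList_succ π i⟩

theorem exists_sequence {V : Type} (x : V) (F : List V → V → V) :
    ∃ π : ℕ → V, π 0 = x ∧ ∀ i, π (i + 1) = F (GameGraph.prefixList π i) (π i) := by
  -- The state is the history together with its last vertex.
  let s : ℕ → List V × V := fun n =>
    Nat.rec ([x], x) (fun _ q => (q.1 ++ [F q.1 q.2], F q.1 q.2)) n
  have hs : ∀ n, s (n + 1) = ((s n).1 ++ [F (s n).1 (s n).2], F (s n).1 (s n).2) := fun _ => rfl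
  have hpre : ∀ n, GameGraph.prefixList (fun i => (s i).2) n = (s n).1 := by
    intro n
    induction n with
    | zero => simp [GameGraph.prefixList, s]
    | succ n ih => rw [prefixList_succ, ih, hs]
  refine ⟨fun i => (s i).2, rfl, fun i => ?_⟩
  rw [hpre]

theorem not_both_win {V : Type} {G : GameGraph V} {Win : (ℕ → V) → Prop}
    (hE : G.EveWins Win) (hA : G.AdamWins Win) : False := by
  classical
  obtain ⟨σ, hσ, hσw⟩ := hE
  obtain ⟨τ, hτ, hτw⟩ := hA
  obtain ⟨π, h0, hπ⟩ := exists_sequence G.init fun l v => if v ∈ G.Eve then σ l else τ l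
  have hplay : G.IsPlay π := by
    refine ⟨h0, fun i => ?_⟩
    rw [hπ i]
    obtain ⟨l, hl⟩ := prefixList_eq_append π i
    rw [hl]
    split_ifs with h
    · exact hσ l _ h
    · exact hτ l _ h
  exact hτw π hplay (fun i hi => by rw [hπ i, if_neg hi])
    (hσw π hplay fun i hi => by rw [hπ i, if_pos hi])

theorem eveWins_of_pos {V : Type} {G : GameGraph V} {Win : (ℕ → V) → Prop}
    (h : G.EveWinsPos Win) : G.EveWins Win := by
  obtain ⟨f, hf, hw⟩ := h
  refine ⟨fun l => f (l.getLastD G.init), fun l v hv => by simpa using hf v hv,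
    fun π hπ hc => hw π hπ fun i hi => ?_⟩
  obtain ⟨l, hl⟩ := prefixList_eq_append π i
  simpa [hl] using hc i hi

theorem adamWins_of_pos {V : Type} {G : GameGraph V} {Win : (ℕ → V) → Prop}
    (h : G.AdamWinsPos Win) : G.AdamWins Win := by
  obtain ⟨f, hf, hw⟩ := h
  refine ⟨fun l => f (l.getLastD G.init), fun l v hv => by simpa using hf v hv,
    fun π hπ hc => hw π hπ fun i hi => ?_⟩
  obtain ⟨l, hl⟩ := prefixList_eq_append π i
  simpa [hl] using hc i hi

theorem pos_or_pos {V : Type} [Finite V] (G : GameGraph V) (I : Set ℤ) :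
    G.EveWinsPos (fun π => ∃ m : ℤ, m ∈ I ∧ G.liminfPayoff π = ((m : ℝ) : EReal)) ∨
    G.AdamWinsPos (fun π => ∃ m : ℤ, m ∈ I ∧ G.liminfPayoff π = ((m : ℝ) : EReal)) := by
  classical
  -- Eve is the player `true`.
  obtain ⟨W, f, S⟩ := positional_determinacy (fun v => decide (v ∈ G.Eve)) G.w
    (fun m => decide (m ∈ I)) G.E fun _ u _ => G.succ u
  choose s hs using G.succ
  -- The solution only prescribes legal moves on the owner's winning region.
  let F : V → V := fun v => if decide (v ∈ G.Eve) = W v then f v else s v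
  have hF : ∀ v, G.E v (F v) := by
    intro v
    by_cases h : decide (v ∈ G.Eve) = W v
    · simpa only [F, if_pos h] using (S.move v (G.succ v) h).1
    · simpa only [F, if_neg h] using hs v
  have key : ∀ π, G.IsPlay π →
      (∀ i, decide (π i ∈ G.Eve) = W G.init → π (i + 1) = F (π i)) →
      ((∃ m : ℤ, m ∈ I ∧ G.liminfPayoff π = ((m : ℝ) : EReal)) ↔ W G.init = true) := by
    rintro π ⟨h0, hπ⟩ hc
    have hconst : ∀ i, W (π i) = W (π 0) := by
      intro i
      induction i with
      | zero => rfl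
      | succ i ih =>
        by_cases ho : decide (π i ∈ G.Eve) = W (π i)
        · have h1 := hc i (by rw [ho, ih, h0])
          simp only [F, if_pos ho] at h1
          rw [h1, (S.move _ ⟨_, hπ i⟩ ho).2, ih]
        · rw [S.trap _ _ ho (hπ i), ih]
    obtain ⟨m, hm⟩ := exists_isLim G.w π
    have hwin := S.win π hπ hconst (fun i ho => by
      have h1 := hc i (by rw [ho, hconst, h0])
      simpa only [F, if_pos ho] using h1) m hm
    rw [h0] at hwin
    rw [hm.liminf_eq, ← hwin, decide_eq_true_iff]
    refine ⟨?_, fun h => ⟨m, h, rfl⟩⟩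
    rintro ⟨m', hm', he⟩
    have : m = m' := by exact_mod_cast he
    exact this ▸ hm'
  cases hW : W G.init with
  | true =>
    exact Or.inl ⟨F, fun v _ => hF v, fun π hπ hc =>
      (key π hπ fun i hi => hc i (by simpa [hW] using hi)).2 hW⟩
  | false =>
    exact Or.inr ⟨F, fun v _ => hF v, fun π hπ hc h => by
      have := (key π hπ fun i hi => hc i (by simpa [hW] using hi)).1 h
      simp [hW] at this⟩

end LiminfGame

/-- In every interval liminf game `(G, I)`, where `I` is a finite
union of integer intervals, positional strategies suffice: if Eve has a winning
strategy then she has a positional one, and likewise for Adam. -/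
theorem stmt2 {V : Type} [Fintype V] (G : GameGraph V) (r : ℕ)
    (Is : Fin r → Set ℤ) (hconn : ∀ i, (Is i).OrdConnected)
    (I : Set ℤ) (hI : I = ⋃ i, Is i) :
    (G.EveWins (fun π => ∃ m : ℤ, m ∈ I ∧ G.liminfPayoff π = ((m : ℝ) : EReal)) →
      G.EveWinsPos (fun π => ∃ m : ℤ, m ∈ I ∧ G.liminfPayoff π = ((m : ℝ) : EReal))) ∧
    (G.AdamWins (fun π => ∃ m : ℤ, m ∈ I ∧ G.liminfPayoff π = ((m : ℝ) : EReal)) →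
      G.AdamWinsPos (fun π => ∃ m : ℤ, m ∈ I ∧ G.liminfPayoff π = ((m : ℝ) : EReal))) := by
  rcases LiminfGame.pos_or_pos G I with h | h
  · exact ⟨fun _ => h, fun hA => (LiminfGame.not_both_win (LiminfGame.eveWins_of_pos h) hA).elim⟩
  · exact ⟨fun hE => (LiminfGame.not_both_win hE (LiminfGame.adamWins_of_pos h)).elim, fun _ => h⟩
end

section
/- Consider the interval mean-payoff game (G, I) where G has vertices V = {q_0, q_1} with V_∃ = {q_0}, initial vertex q_0, and edges: a self-loop on q_0 of weight 0, an edge q_0 → q_1 of weight 1, a self-loop on q_1 of weight 2, and an edge q_1 → q_0 of weight 1; the winning set is I = (0, 1] ∪ [2, ∞). Then Eve has a winning strategy in this game, but she has no finite-memory winning strategy: for every strategy of Eve computed by a finite-state machine there is a consistent play π with MP(π) ∉ I. -/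
/-!
An edge `u → v` of `G4` has weight `u + v`, so the mean-payoff of a play is twice the lower
density of its visits to `q₁` (`G4Proof.partialSum_eq`). Eve must make this density equal to `1`
or lie in `(0, 1/2]`.

With infinite memory she counts the visits to `q₁`: at `q₀` she stays while the density so far
exceeds `1/4` and moves to `q₁` otherwise. The density then never drops essentially below `1/4`
(`G4Proof.eve_lower`). Either Adam eventually stays in `q₁` and the payoff is `2`, or `q₀` is
visited infinitely often and each time Eve waits for the density to drop to `1/4`
(`G4Proof.eve_upper`), so the payoff lies in `(0, 1]`.

Against a finite-state machine Adam leaves `q₁` exactly when the density of `q₁` is at least `3/4`.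
If Eve eventually stays in `q₀` the payoff is `0`. Otherwise the length of her stays in `q₀` is
uniformly bounded, as it depends only on the memory state on arrival (`G4Proof.bounded_runs`);
hence the number of visits to `q₁` in the first `k` positions differs from `3k/4` by a bounded
amount (`G4Proof.bal_le`, `G4Proof.le_bal`) and the payoff is `3/2`. Neither value is in the
winning set.
-/

open Filter

/-- The game graph of Figure 1: vertices `q₀ = 0` (Eve's) and `q₁ = 1` (Adam's),
with a self-loop of weight 0 on `q₀`, an edge `q₀ → q₁` of weight 1, a self-loop of
weight 2 on `q₁`, and an edge `q₁ → q₀` of weight 1. -/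
def G4 : GameGraph (Fin 2) where
  Eve := {0}
  E _ _ := True
  w u v := if u = v then (if u = 0 then 0 else 2) else 1
  init := 0
  succ v := ⟨v, trivial⟩

namespace G4Proof

/-- The number of visits to `q₁` among the first `k` positions of `π`. -/
abbrev ones (π : ℕ → Fin 2) (k : ℕ) : ℕ := Nat.count (fun i => π i = 1) k

lemma eq_zero_or_one (v : Fin 2) : v = 0 ∨ v = 1 := by
  fin_cases v <;> simp

/-- Every edge `u → v` has weight `u + v`, so weights telescope to twice the number of visits
to `q₁`, up to the contribution of the last vertex. -/
lemma partialSum_eq (π : ℕ → Fin 2) (h0 : π 0 = 0) (k : ℕ) :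
    G4.partialSum π k = 2 * (ones π k : ℤ) + (if π k = 1 then 1 else 0) := by
  induction k with
  | zero => simp [GameGraph.partialSum, h0]
  | succ k ih =>
    rw [GameGraph.partialSum, Finset.sum_range_succ, ← GameGraph.partialSum, ih, ones, ones,
      Nat.count_succ]
    rcases eq_zero_or_one (π k) with h | h <;> rcases eq_zero_or_one (π (k + 1)) with hv | hv <;>
      simp [G4, h, hv] <;> ring

lemma ones_le (π : ℕ → Fin 2) (k : ℕ) : ones π k ≤ k := Nat.count_le _

/-- A play whose partial sums stay within bounded distance of `c * k` has mean-payoff `c`. -/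
lemma MP_eq_of_bounded (π : ℕ → Fin 2) (c C : ℝ)
    (h : ∀ k, |(G4.partialSum π k : ℝ) - c * k| ≤ C) : G4.MP π = c := by
  apply Tendsto.liminf_eq
  have hC : Tendsto (fun k : ℕ => C / (k : ℝ)) atTop (nhds 0) :=
    tendsto_const_div_atTop_nhds_zero_nat C
  rw [tendsto_iff_norm_sub_tendsto_zero]
  refine squeeze_zero' (Eventually.of_forall fun _ => norm_nonneg _) ?_ hC
  filter_upwards [eventually_gt_atTop 0] with k hk
  have hkr : (0 : ℝ) < k := by exact_mod_cast hk
  rw [Real.norm_eq_abs, div_sub' hkr.ne', abs_div, abs_of_pos hkr]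
  gcongr
  rw [mul_comm]
  exact h k

/-! ### Eve's infinite-memory winning strategy -/

/-- Eve's strategy on a history ending in `q₀`: stay iff `q₁` was visited at more than a quarter
of the positions before the current one. The history includes the current position, whence `≤`. -/
def eveStrategy (l : List (Fin 2)) : Fin 2 :=
  if l.length ≤ 4 * l.count 1 then 0 else 1

lemma count_prefixList (π : ℕ → Fin 2) (i : ℕ) :
    (GameGraph.prefixList π i).count 1 = ones π (i + 1) := by
  have : GameGraph.prefixList π i = (List.range (i + 1)).map π := by
    apply List.ext_getElem <;> simp [GameGraph.prefixList, -List.ofFn_succ]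
  rw [this, ones]
  generalize i + 1 = n
  induction n with
  | zero => simp
  | succ n ih =>
    rw [List.range_succ, List.map_append, List.count_append, ih, Nat.count_succ]
    simp [List.count_singleton]

/-- The move Eve makes at a visit of `q₀`, in terms of the count of previous visits to `q₁`. -/
lemma eve_step {π : ℕ → Fin 2} (hc : G4.ConsEve eveStrategy π) {i : ℕ} (hi : π i = 0) :
    π (i + 1) = if i < 4 * ones π i then 0 else 1 := by
  rw [hc i (by simp [G4, hi]), eveStrategy, count_prefixList]
  simp [GameGraph.prefixList, ones, Nat.count_succ, hi]

lemma eve_lower {π : ℕ → Fin 2} (hc : G4.ConsEve eveStrategy π) (k : ℕ) :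
    k ≤ 4 * ones π k ∨ (k ≤ 4 * ones π k + 1 ∧ π k = 1) := by
  induction k with
  | zero => simp
  | succ k ih =>
    have hs : ones π (k + 1) = ones π k + if π k = 1 then 1 else 0 := Nat.count_succ _ _
    rcases eq_zero_or_one (π k) with h | h
    · have h1 := eve_step hc h
      simp only [h, zero_ne_one, if_false, or_false, and_false, add_zero] at ih hs
      split_ifs at h1
      · left; omega
      · right; exact ⟨by omega, h1⟩
    · simp only [h, if_true] at hs
      left; omega

/-- If `q₀` is visited after time `n`, then Eve waits there until the density of `q₁` has
dropped to a quarter. -/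
lemma eve_upper {π : ℕ → Fin 2} (hc : G4.ConsEve eveStrategy π) {n : ℕ} (hn : π n = 0) :
    ∃ k, n ≤ k ∧ 4 * ones π k ≤ k := by
  by_contra! hcon
  have key : ∀ j, π (n + j) = 0 ∧ ones π (n + j) = ones π n := by
    intro j
    induction j with
    | zero => exact ⟨hn, rfl⟩
    | succ j ih =>
      have h1 := eve_step hc ih.1
      rw [if_pos (hcon _ (by omega))] at h1
      refine ⟨h1, ?_⟩
      rw [← add_assoc, ones, Nat.count_succ, if_neg (by simp [ih.1])]
      exact ih.2
  have := hcon (n + 4 * ones π n) (by omega)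
  rw [(key _).2] at this
  omega

lemma eve_wins :
    G4.EveWins (fun π => G4.MP π ∈ Set.Ioc (0 : ℝ) 1 ∪ Set.Ici (2 : ℝ)) := by
  refine ⟨eveStrategy, fun _ _ _ => trivial, fun π hp hc => ?_⟩
  have h0 : π 0 = 0 := hp.1
  by_cases hev : ∃ n, ∀ k, n ≤ k → π k = 1
  · -- Adam stays in `q₁` forever: the mean-payoff is `2`.
    obtain ⟨n, hn⟩ := hev
    right
    have hlow : ∀ k, k ≤ ones π k + n := by
      intro k
      induction k with
      | zero => simp
      | succ k ih =>
        have hs : ones π (k + 1) = ones π k + if π k = 1 then 1 else 0 := Nat.count_succ _ _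
        by_cases hk : n ≤ k
        · rw [if_pos (hn k hk)] at hs; omega
        · omega
    refine (MP_eq_of_bounded π 2 (2 * n + 1) fun k => ?_).ge
    have h1 : (k : ℝ) ≤ ones π k + n := by exact_mod_cast hlow k
    have h2 : (ones π k : ℝ) ≤ k := by exact_mod_cast ones_le π k
    rw [partialSum_eq π h0, abs_le]
    push_cast
    split_ifs <;> constructor <;> linarith
  · push Not at hev
    left
    have hlow : ∀ k, 1 < k → (1 / 4 : ℝ) ≤ G4.partialSum π k / k := by
      intro k hk
      have hkr : (2 : ℝ) ≤ k := by exact_mod_cast hk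
      have h1 : (k : ℝ) ≤ 4 * ones π k + 1 := by
        have := eve_lower hc k
        exact_mod_cast (by omega : k ≤ 4 * ones π k + 1)
      rw [le_div_iff₀ (by linarith), partialSum_eq π h0]
      push_cast
      split_ifs <;> linarith
    have hup : ∀ k, (G4.partialSum π k : ℝ) / k ≤ 3 := by
      intro k
      rcases Nat.eq_zero_or_pos k with rfl | hk
      · simp
      have hkr : (1 : ℝ) ≤ k := by exact_mod_cast hk
      have h2 : (ones π k : ℝ) ≤ k := by exact_mod_cast ones_le π k
      rw [div_le_iff₀ (by linarith), partialSum_eq π h0]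
      push_cast
      split_ifs <;> linarith
    have hevlow : ∀ᶠ k : ℕ in atTop, (1 / 4 : ℝ) ≤ G4.partialSum π k / k := by
      filter_upwards [eventually_gt_atTop 1] with k hk using hlow k hk
    have hfreq : ∃ᶠ k : ℕ in atTop, (G4.partialSum π k : ℝ) / k ≤ 1 := by
      rw [frequently_atTop]
      intro a
      obtain ⟨n, han, hn⟩ := hev (a + 2)
      obtain ⟨k, hnk, hk⟩ := eve_upper hc ((eq_zero_or_one _).resolve_right hn)
      refine ⟨k, by omega, ?_⟩
      have hkr : (2 : ℝ) ≤ k := by exact_mod_cast (by omega : 2 ≤ k)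
      have h1 : 4 * (ones π k : ℝ) ≤ k := by exact_mod_cast hk
      rw [div_le_iff₀ (by linarith), partialSum_eq π h0]
      push_cast
      split_ifs <;> linarith
    have hbdd : IsBoundedUnder (· ≥ ·) atTop (fun k : ℕ => (G4.partialSum π k : ℝ) / k) :=
      ⟨1 / 4, hevlow⟩
    have hcob : IsCoboundedUnder (· ≥ ·) atTop (fun k : ℕ => (G4.partialSum π k : ℝ) / k) :=
      IsBoundedUnder.isCoboundedUnder_ge (isBoundedUnder_of ⟨3, hup⟩)
    constructor
    · exact lt_of_lt_of_le (by norm_num) (le_liminf_of_le hcob hevlow)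
    · exact liminf_le_of_frequently_le hfreq hbdd

/-! ### Adam's spoiling play against a finite-state machine -/

section Adam

variable {M : Type} (m0 : M) (δ : M → Fin 2 → M) (o : M → Fin 2 → Fin 2)

/-- The spoiling play against the machine `(m0, δ, o)`, together with the machine's memory and
the balance `D = 4 N - 3 k`, where `N` is the number of visits to `q₁` in the first `k` positions.
The triple is `(D, memory, vertex)`; Adam leaves `q₁` iff `D ≥ 0`. -/
def spoil : ℕ → ℤ × M × Fin 2
  | 0 => (0, m0, 0)
  | k + 1 =>
    let s := spoil k
    (if s.2.2 = 1 then s.1 + 1 else s.1 - 3, δ s.2.1 s.2.2,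
      if s.2.2 = 0 then o s.2.1 s.2.2 else if 0 ≤ s.1 then 0 else 1)

/-- The vertex sequence of the spoiling play. -/
def spoilPlay (k : ℕ) : Fin 2 := (spoil m0 δ o k).2.2

/-- The balance `4 N - 3 k` along the spoiling play. -/
def bal (k : ℕ) : ℤ := (spoil m0 δ o k).1

lemma spoil_mem (k : ℕ) :
    GameGraph.memRun δ m0 (spoilPlay m0 δ o) k = (spoil m0 δ o k).2.1 := by
  induction k with
  | zero => rfl
  | succ k ih => simp only [GameGraph.memRun, ih, spoil, spoilPlay]

lemma spoil_cons : G4.ConsEveFM m0 δ o (spoilPlay m0 δ o) := by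
  intro i hi
  have hi' : (spoil m0 δ o i).2.2 = 0 := hi
  rw [spoil_mem]
  simp only [spoilPlay, spoil]
  rw [if_pos hi']

lemma bal_succ (k : ℕ) : bal m0 δ o (k + 1) =
    if spoilPlay m0 δ o k = 1 then bal m0 δ o k + 1 else bal m0 δ o k - 3 := rfl

lemma spoilPlay_of_one {k : ℕ} (h : spoilPlay m0 δ o k = 1) :
    spoilPlay m0 δ o (k + 1) = if 0 ≤ bal m0 δ o k then 0 else 1 := by
  have hv : (spoil m0 δ o k).2.2 = 1 := h
  simp only [spoilPlay, spoil]
  rw [if_neg (by simp [hv])]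
  rfl

lemma bal_eq (k : ℕ) : bal m0 δ o k = 4 * (ones (spoilPlay m0 δ o) k : ℤ) - 3 * k := by
  induction k with
  | zero => simp [bal, spoil]
  | succ k ih =>
    rw [bal_succ, ih, ones, ones, Nat.count_succ]
    split_ifs <;> push_cast <;> ring

lemma bal_le (k : ℕ) :
    bal m0 δ o k ≤ 0 ∨ (bal m0 δ o k ≤ 1 ∧ spoilPlay m0 δ o k = 0) := by
  induction k with
  | zero => left; simp [bal, spoil]
  | succ k ih =>
    have hs := bal_succ m0 δ o k
    rcases eq_zero_or_one (spoilPlay m0 δ o k) with h | h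
    · simp only [h, zero_ne_one, if_false] at hs
      left; omega
    · simp only [h, if_true, one_ne_zero, and_false, or_false] at hs ih
      by_cases hb : 0 ≤ bal m0 δ o k
      · right
        refine ⟨by omega, ?_⟩
        rw [spoilPlay_of_one m0 δ o h, if_pos hb]
      · left; omega

/-- If no run of zeros `s, …, k` has more than `B + 1` vertices, the balance is bounded below:
Adam only leaves `q₁` with a nonnegative balance. -/
lemma le_bal (B : ℕ)
    (hB : ∀ s k, s ≤ k → (∀ i, s ≤ i → i ≤ k → spoilPlay m0 δ o i = 0) → k ≤ s + B) (k : ℕ) :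
    -3 * (B + 1 : ℤ) ≤ bal m0 δ o k ∧ (spoilPlay m0 δ o k = 0 →
      ∃ s ≤ k, (∀ i, s ≤ i → i ≤ k → spoilPlay m0 δ o i = 0) ∧
        -3 * ((k : ℤ) - s) ≤ bal m0 δ o k) := by
  induction k with
  | zero =>
    have hb : bal m0 δ o 0 = 0 := rfl
    refine ⟨by rw [hb]; omega, fun h => ⟨0, le_rfl, fun i _ hi => ?_, by simp [hb]⟩⟩
    rwa [Nat.le_zero.1 hi]
  | succ k ih =>
    have hs := bal_succ m0 δ o k
    obtain ⟨ih1, ih2⟩ := ih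
    rcases eq_zero_or_one (spoilPlay m0 δ o k) with h | h
    · simp only [h, zero_ne_one, if_false] at hs
      obtain ⟨s, hsk, hz, hd⟩ := ih2 h
      have := hB s k hsk hz
      refine ⟨by omega, fun h1 => ⟨s, by omega, fun i hi hik => ?_, by push_cast; omega⟩⟩
      rcases Nat.lt_or_ge k i with hlt | hge
      · rwa [show i = k + 1 by omega]
      · exact hz i hi hge
    · simp only [h, if_true] at hs
      refine ⟨by omega, fun h1 => ⟨k + 1, le_rfl, fun i hi hik => ?_, ?_⟩⟩
      · rwa [show i = k + 1 by omega]
      · rw [spoilPlay_of_one m0 δ o h] at h1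
        have hb : 0 ≤ bal m0 δ o k := by
          by_contra hb
          simp [hb] at h1
        push_cast
        omega

/-- While the play stays in `q₀`, the memory just iterates `δ · q₀`. -/
lemma mem_iterate {s : ℕ} (j : ℕ) (h : ∀ i < j, spoilPlay m0 δ o (s + i) = 0) :
    (spoil m0 δ o (s + j)).2.1 = (fun m => δ m 0)^[j] (spoil m0 δ o s).2.1 := by
  induction j with
  | zero => rfl
  | succ j ih =>
    rw [Function.iterate_succ_apply', ← ih fun i hi => h i (by omega)]
    have hv : (spoil m0 δ o (s + j)).2.2 = 0 := h j (by omega)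
    rw [← add_assoc]
    simp [spoil, hv]

/-- Either the play eventually stays in `q₀`, or its stays in `q₀` are uniformly bounded: the
time Eve takes to leave depends only on the memory state on arrival, and there are finitely many. -/
lemma bounded_runs [Finite M] (hne : ¬ ∃ n, ∀ k, n ≤ k → spoilPlay m0 δ o k = 0) :
    ∃ B, ∀ s k, s ≤ k → (∀ i, s ≤ i → i ≤ k → spoilPlay m0 δ o i = 0) → k ≤ s + B := by
  classical
  have hex : ∀ m : M, ∃ j, (∃ i, o ((fun m => δ m 0)^[i] m) 0 ≠ 0) →
      o ((fun m => δ m 0)^[j] m) 0 ≠ 0 := by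
    intro m
    by_cases h : ∃ i, o ((fun m => δ m 0)^[i] m) 0 ≠ 0
    · exact ⟨h.choose, fun _ => h.choose_spec⟩
    · exact ⟨0, fun hv => absurd hv h⟩
  choose J hJ using hex
  obtain ⟨B, hB⟩ := (Set.finite_range J).bddAbove
  have hcons : ∀ i, spoilPlay m0 δ o i = 0 →
      spoilPlay m0 δ o (i + 1) = o (spoil m0 δ o i).2.1 0 := by
    intro i hi
    have hv : (spoil m0 δ o i).2.2 = 0 := hi
    simp [spoilPlay, spoil, hv]
  refine ⟨B, fun s k hsk hz => ?_⟩
  by_contra! hlt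
  set m := (spoil m0 δ o s).2.1 with hm
  have hJB : J m ≤ B := hB ⟨m, rfl⟩
  by_cases h : ∃ i, o ((fun m => δ m 0)^[i] m) 0 ≠ 0
  · apply hJ m h
    rw [hm, ← mem_iterate m0 δ o (J m) fun i hi => hz _ (by omega) (by omega),
      ← hcons _ (hz _ (by omega) (by omega))]
    exact hz _ (by omega) (by omega)
  · push Not at h
    -- The machine never leaves `q₀` from memory `m`.
    apply hne
    have hall : ∀ j, ∀ i ≤ j, spoilPlay m0 δ o (s + i) = 0 := by
      intro j
      induction j with
      | zero =>
        intro i hi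
        exact hz _ (by omega) (by omega)
      | succ j ih =>
        intro i hi
        rcases Nat.lt_or_ge j i with hlt | hge
        · rw [show s + i = s + j + 1 by omega, hcons _ (ih j le_rfl),
            mem_iterate m0 δ o j fun i hi => ih i hi.le]
          exact h j
        · exact ih i hge
    refine ⟨s, fun k hk => ?_⟩
    obtain ⟨j, rfl⟩ := Nat.exists_eq_add_of_le hk
    exact hall j j le_rfl

/-- The spoiling play has mean-payoff `0` or `3/2`. -/
lemma spoil_MP [Finite M] :
    G4.MP (spoilPlay m0 δ o) = 0 ∨ G4.MP (spoilPlay m0 δ o) = 3 / 2 := by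
  have h0 : spoilPlay m0 δ o 0 = 0 := rfl
  by_cases hev : ∃ n, ∀ k, n ≤ k → spoilPlay m0 δ o k = 0
  · obtain ⟨n, hn⟩ := hev
    left
    have hup : ∀ k, ones (spoilPlay m0 δ o) k ≤ n := by
      intro k
      rcases le_total k n with hk | hk
      · exact (ones_le _ k).trans hk
      · obtain ⟨j, rfl⟩ := Nat.exists_eq_add_of_le hk
        clear hk
        induction j with
        | zero => exact ones_le _ n
        | succ j ih =>
          rw [← add_assoc, ones, Nat.count_succ, if_neg (by simp [hn (n + j) (by omega)])]
          exact ih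
    refine MP_eq_of_bounded _ 0 (2 * n + 1) fun k => ?_
    have h1 : (ones (spoilPlay m0 δ o) k : ℝ) ≤ n := by exact_mod_cast hup k
    have h2 : (0 : ℝ) ≤ ones (spoilPlay m0 δ o) k := by positivity
    rw [partialSum_eq _ h0, abs_le]
    push_cast
    split_ifs <;> constructor <;> linarith
  · right
    obtain ⟨B, hB⟩ := bounded_runs m0 δ o hev
    refine MP_eq_of_bounded _ (3 / 2) (3 * (B + 1) + 2) fun k => ?_
    have h1 := (le_bal m0 δ o B hB k).1
    have h2 : bal m0 δ o k ≤ 1 := by have := bal_le m0 δ o k; omega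
    rw [bal_eq] at h1 h2
    have hr1 : -3 * (B + 1 : ℝ) ≤ 4 * (ones (spoilPlay m0 δ o) k : ℝ) - 3 * k := by
      exact_mod_cast h1
    have hr2 : 4 * (ones (spoilPlay m0 δ o) k : ℝ) - 3 * k ≤ 1 := by exact_mod_cast h2
    have hBn : (0 : ℝ) ≤ B := by positivity
    rw [partialSum_eq _ h0, abs_le]
    push_cast
    split_ifs <;> constructor <;> linarith

end Adam

end G4Proof

/-- In the interval mean-payoff game of Figure 1 with
`I = (0,1] ∪ [2,∞)`, Eve has a winning strategy but no finite-memory winning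
strategy. -/
theorem stmt4 :
    G4.EveWins (fun π => G4.MP π ∈ Set.Ioc (0 : ℝ) 1 ∪ Set.Ici (2 : ℝ)) ∧
      ¬ G4.EveWinsFM (fun π => G4.MP π ∈ Set.Ioc (0 : ℝ) 1 ∪ Set.Ici (2 : ℝ)) := by
  refine ⟨G4Proof.eve_wins, ?_⟩
  rintro ⟨M, _, m0, δ, o, -, hwin⟩
  have hI : G4.MP (G4Proof.spoilPlay m0 δ o) ∈ Set.Ioc (0 : ℝ) 1 ∪ Set.Ici (2 : ℝ) :=
    hwin _ ⟨rfl, fun _ => trivial⟩ (G4Proof.spoil_cons m0 δ o)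
  rcases G4Proof.spoil_MP m0 δ o with h | h <;> rw [h] at hI <;> norm_num at hI
end

section
/- Let G be a game graph and let I be a finite union of real intervals with a = inf I > −∞ and a ∈ I; let I_1 be the interval of I containing a. Suppose Eve has a positional strategy σ_> such that from every vertex v ∈ V every play consistent with σ_> satisfies MP(π) ≥ a, and suppose Eve has a strategy σ_< such that from every vertex v ∈ V every play consistent with σ_< satisfies MP(π) ∈ (−∞, a] ∪ I. Then from every vertex Eve has a winning strategy for the interval mean-payoff objective I, i.e., a strategy such that every consistent play π satisfies MP(π) ∈ I. -/
/-!
Shift all weights by `a` and let `D π k = w(π[..k]) - a * k`. Eve's strategy only looks at the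
sign of `D`: while `D < 0` she plays the positional strategy `f`, and while `D ≥ 0` she plays
`σ₂` on the history since the last time `D` was negative (`restart`).

* In the graph restricted to `f`, every closed walk has nonnegative shifted weight, since repeating
  it forever gives a play consistent with `f` (`closed_walk_nonneg`). Hence every finite path in
  that graph has shifted weight at least `-|V| * K`, with `K` a bound on a single shifted weight
  (`path_lower`).
* A maximal stretch of negative `D` starts at a value `≥ -K` and decreases by at most `|V| * K`,
  so `D` is bounded below along the whole play (`D_lower`), and `MP π ≥ a`.
* If `D` is negative infinitely often, then `MP π ≤ a`, so `MP π = a ∈ I`. Otherwise `D ≥ 0` from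
  some first time `N` on, and the play from time `N` is consistent with `σ₂`. As the mean-payoff
  does not depend on finite prefixes (`MP_shift`), `MP π ∈ (-∞, a] ∪ I`, which together with
  `MP π ≥ a` gives `MP π ∈ I`.
-/

open Filter

namespace GameGraph

variable {V : Type}

/-- The weight of the length-`k` prefix of `π` after subtracting `a` from every edge weight. -/
noncomputable def D (G : GameGraph V) (a : ℝ) (π : ℕ → V) (k : ℕ) : ℝ :=
  (G.partialSum π k : ℝ) - a * k

lemma D_zero (G : GameGraph V) (a : ℝ) (π : ℕ → V) : G.D a π 0 = 0 := by
  simp [D, partialSum]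

lemma D_succ (G : GameGraph V) (a : ℝ) (π : ℕ → V) (k : ℕ) :
    G.D a π (k + 1) = G.D a π k + ((G.w (π k) (π (k + 1)) : ℝ) - a) := by
  simp only [D, partialSum, Finset.sum_range_succ]
  push_cast
  ring

lemma D_add (G : GameGraph V) (a : ℝ) (π : ℕ → V) (N k : ℕ) :
    G.D a π (N + k) = G.D a π N + G.D a (fun j => π (N + j)) k := by
  induction k with
  | zero => simp [D_zero]
  | succ k ih =>
    rw [← add_assoc, D_succ, ih, D_succ, add_assoc]
    rfl

lemma D_congr (G : GameGraph V) (a : ℝ) {π τ : ℕ → V} {k : ℕ} (h : ∀ j ≤ k, π j = τ j) :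
    G.D a π k = G.D a τ k := by
  induction k with
  | zero => simp [D_zero]
  | succ k ih =>
    rw [D_succ, D_succ, ih fun j hj => h j (by omega), h k (by omega), h (k + 1) le_rfl]

lemma D_abs_le (G : GameGraph V) {a K : ℝ} (hK : ∀ u v, |(G.w u v : ℝ) - a| ≤ K)
    (π : ℕ → V) (k : ℕ) : |G.D a π k| ≤ K * k := by
  induction k with
  | zero => simp [D_zero]
  | succ k ih =>
    rw [D_succ]
    refine (abs_add_le _ _).trans ?_
    have := hK (π k) (π (k + 1))
    push_cast
    linarith

lemma avg_eq (G : GameGraph V) (a : ℝ) (π : ℕ → V) {k : ℕ} (hk : 0 < k) :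
    (G.partialSum π k : ℝ) / (k : ℝ) = a + G.D a π k / k := by
  have : (0 : ℝ) < k := by exact_mod_cast hk
  unfold D
  field_simp
  ring

lemma exists_bound [Fintype V] (G : GameGraph V) (a : ℝ) :
    ∃ K : ℝ, 0 ≤ K ∧ ∀ u v, |(G.w u v : ℝ) - a| ≤ K := by
  obtain ⟨K, hK⟩ := (Set.finite_range fun p : V × V => |(G.w p.1 p.2 : ℝ) - a|).bddAbove
  have h : ∀ u v, |(G.w u v : ℝ) - a| ≤ K := fun u v => hK ⟨(u, v), rfl⟩
  exact ⟨K, (abs_nonneg _).trans (h G.init G.init), h⟩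

/-! ### Mean-payoff -/

lemma avg_abs_le (G : GameGraph V) {a K : ℝ} (hK0 : 0 ≤ K)
    (hK : ∀ u v, |(G.w u v : ℝ) - a| ≤ K) (π : ℕ → V) (k : ℕ) :
    |(G.partialSum π k : ℝ) / (k : ℝ)| ≤ |a| + K := by
  rcases Nat.eq_zero_or_pos k with rfl | hk
  · simpa using add_nonneg (abs_nonneg a) hK0
  · rw [G.avg_eq a π hk]
    refine (abs_add_le _ _).trans ?_
    have hk' : (0 : ℝ) < k := by exact_mod_cast hk
    have : |G.D a π k / k| ≤ K := by
      rw [abs_div, abs_of_pos hk', div_le_iff₀ hk']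
      exact G.D_abs_le hK π k
    linarith

lemma avg_bdd_ge [Fintype V] (G : GameGraph V) (π : ℕ → V) :
    IsBoundedUnder (· ≥ ·) atTop fun k : ℕ => (G.partialSum π k : ℝ) / (k : ℝ) := by
  obtain ⟨K, hK0, hK⟩ := G.exists_bound 0
  exact isBoundedUnder_of ⟨_, fun k => (abs_le.1 (G.avg_abs_le hK0 hK π k)).1⟩

lemma avg_bdd_le [Fintype V] (G : GameGraph V) (π : ℕ → V) :
    IsBoundedUnder (· ≤ ·) atTop fun k : ℕ => (G.partialSum π k : ℝ) / (k : ℝ) := by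
  obtain ⟨K, hK0, hK⟩ := G.exists_bound 0
  exact isBoundedUnder_of ⟨_, fun k => (abs_le.1 (G.avg_abs_le hK0 hK π k)).2⟩

lemma MP_le_of_frequently [Fintype V] (G : GameGraph V) {π : ℕ → V} {c : ℝ}
    (h : ∃ᶠ k : ℕ in atTop, (G.partialSum π k : ℝ) / (k : ℝ) ≤ c) : G.MP π ≤ c :=
  liminf_le_of_frequently_le h (G.avg_bdd_ge π)

lemma le_MP_of_eventually [Fintype V] (G : GameGraph V) {π : ℕ → V} {c : ℝ}
    (h : ∀ᶠ k : ℕ in atTop, c ≤ (G.partialSum π k : ℝ) / (k : ℝ)) : c ≤ G.MP π :=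
  le_liminf_of_le (G.avg_bdd_le π).isCoboundedUnder_ge h

/-- A play along which `D` is bounded below has mean-payoff at least `a`. -/
lemma le_MP_of_D_lower [Fintype V] (G : GameGraph V) {a C : ℝ} {π : ℕ → V}
    (h : ∀ k, -C ≤ G.D a π k) : a ≤ G.MP π := by
  refine le_of_forall_pos_le_add fun ε hε => ?_
  rw [← sub_le_iff_le_add]
  apply G.le_MP_of_eventually
  have hlim := tendsto_const_div_atTop_nhds_zero_nat C
  filter_upwards [hlim.eventually_lt_const hε, eventually_gt_atTop 0] with k hk hk0
  rw [G.avg_eq a π hk0]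
  have hk' : (0 : ℝ) < k := by exact_mod_cast hk0
  have : -C / k ≤ G.D a π k / k := by gcongr; exact h k
  rw [neg_div] at this
  linarith

lemma MP_le_of_frequently_D_neg [Fintype V] (G : GameGraph V) {a : ℝ} {π : ℕ → V}
    (h : ∃ᶠ k in atTop, G.D a π k < 0) : G.MP π ≤ a := by
  apply G.MP_le_of_frequently
  refine (h.and_eventually (eventually_gt_atTop 0)).mono fun k hk => ?_
  rw [G.avg_eq a π hk.2]
  have hk' : (0 : ℝ) < k := by exact_mod_cast hk.2
  have := div_neg_of_neg_of_pos hk.1 hk'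
  linarith

lemma liminf_le_of_sub_tendsto {u v : ℕ → ℝ} (hu : IsBoundedUnder (· ≥ ·) atTop u)
    (hv : IsBoundedUnder (· ≤ ·) atTop v)
    (h : Tendsto (fun k => u k - v k) atTop (nhds 0)) : liminf u atTop ≤ liminf v atTop := by
  refine le_of_forall_lt_imp_le_of_dense fun c hc => ?_
  obtain ⟨d, hcd, hd⟩ := exists_between hc
  refine le_liminf_of_le hv.isCoboundedUnder_ge ?_
  filter_upwards [eventually_lt_of_lt_liminf hd hu,
    h.eventually_lt_const (sub_pos.2 hcd)] with k h1 h2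
  linarith

/-- The mean-payoff is independent of finite prefixes. -/
lemma MP_shift [Fintype V] (G : GameGraph V) (π : ℕ → V) (N : ℕ) :
    G.MP (fun j => π (N + j)) = G.MP π := by
  obtain ⟨K, hK0, hK⟩ := G.exists_bound 0
  set τ : ℕ → V := fun j => π (N + j) with hτ
  have hMP : G.MP π
      = liminf (fun k : ℕ => (G.partialSum π (k + N) : ℝ) / ((k + N : ℕ) : ℝ)) atTop :=
    (liminf_nat_add (fun k : ℕ => (G.partialSum π k : ℝ) / (k : ℝ)) N).symm
  have hlim : Tendsto (fun k : ℕ => (G.partialSum τ k : ℝ) / (k : ℝ)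
      - (G.partialSum π (k + N) : ℝ) / ((k + N : ℕ) : ℝ)) atTop (nhds 0) := by
    refine squeeze_zero_norm' ?_
      (tendsto_const_div_atTop_nhds_zero_nat (K * N + |G.D 0 π N|))
    filter_upwards [eventually_gt_atTop 0] with k hk
    have hk' : (0 : ℝ) < k := by exact_mod_cast hk
    have hN : (0 : ℝ) ≤ N := Nat.cast_nonneg N
    rw [G.avg_eq 0 τ hk, G.avg_eq 0 π (by omega : 0 < k + N), add_comm k N, D_add, ← hτ,
      Real.norm_eq_abs]
    have hD := G.D_abs_le hK τ k
    have hsum : (0 : ℝ) < N + k := by linarith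
    have e : 0 + G.D 0 τ k / k - (0 + (G.D 0 π N + G.D 0 τ k) / ((N + k : ℕ) : ℝ))
        = (G.D 0 τ k * N / k - G.D 0 π N) / (N + k) := by
      push_cast
      field_simp
      ring
    rw [e, abs_div, abs_of_pos hsum]
    have h1 : |G.D 0 τ k * N / k - G.D 0 π N| ≤ K * N + |G.D 0 π N| := by
      refine (abs_sub _ _).trans ?_
      gcongr
      rw [abs_div, abs_mul, abs_of_pos hk', abs_of_nonneg hN, div_le_iff₀ hk']
      nlinarith
    have h2 : (k : ℝ) ≤ N + k := by linarith
    gcongr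
  have hlim' := hlim.neg
  simp only [neg_sub, neg_zero] at hlim'
  have hge : IsBoundedUnder (· ≥ ·) atTop
      fun k : ℕ => (G.partialSum π (k + N) : ℝ) / ((k + N : ℕ) : ℝ) :=
    isBoundedUnder_of ⟨_, fun k => (abs_le.1 (G.avg_abs_le hK0 hK π (k + N))).1⟩
  have hle : IsBoundedUnder (· ≤ ·) atTop
      fun k : ℕ => (G.partialSum π (k + N) : ℝ) / ((k + N : ℕ) : ℝ) :=
    isBoundedUnder_of ⟨_, fun k => (abs_le.1 (G.avg_abs_le hK0 hK π (k + N))).2⟩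
  rw [hMP]
  exact le_antisymm (liminf_le_of_sub_tendsto (G.avg_bdd_ge τ) hle hlim)
    (liminf_le_of_sub_tendsto hge (G.avg_bdd_le τ) hlim')

/-! ### Finite paths consistent with the positional strategy -/

/-- Edges that may be traversed by plays consistent with the positional strategy `f`. -/
def FEdge (G : GameGraph V) (f : V → V) (u v : V) : Prop :=
  G.E u v ∧ (u ∈ G.Eve → v = f u)

/-- Repeating a closed walk of negative shifted weight forever would produce a play consistent
with `f` of mean-payoff less than `a`. -/
lemma closed_walk_nonneg [Fintype V] (G : GameGraph V) {a : ℝ} {f : V → V}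
    (hfwin : ∀ v π, G.IsPlayFrom v π → G.ConsEvePos f π → a ≤ G.MP π)
    {π : ℕ → V} {p : ℕ} (hp : 0 < p) (hclosed : π p = π 0)
    (hE : ∀ i < p, G.FEdge f (π i) (π (i + 1))) : 0 ≤ G.D a π p := by
  set τ : ℕ → V := fun k => π (k % p) with hτ
  have hstep : ∀ i, τ (i + 1) = π (i % p + 1) := by
    intro i
    have hlt := Nat.mod_lt i hp
    rcases Nat.lt_or_ge (i % p + 1) p with h | h
    · simp only [hτ]
      rw [Nat.add_mod, Nat.mod_eq_of_lt (a := 1) (by omega), Nat.mod_eq_of_lt h]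
    · have h' : i % p + 1 = p := by omega
      have : (i + 1) % p = 0 := by
        rw [← Nat.mod_add_mod, h', Nat.mod_self]
      simp only [hτ]
      rw [this, h', hclosed]
  have hedge : ∀ i, G.FEdge f (τ i) (τ (i + 1)) := by
    intro i
    rw [hstep]
    exact hE _ (Nat.mod_lt i hp)
  have hMP := hfwin (τ 0) τ ⟨rfl, fun i => (hedge i).1⟩ fun i => (hedge i).2
  by_contra! hneg
  have hp1 : G.D a τ p = G.D a π p := by
    apply D_congr
    intro j hj
    rcases hj.lt_or_eq with h | rfl
    · simp [hτ, Nat.mod_eq_of_lt h]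
    · simp [hτ, hclosed]
  have hper : (fun j => τ (p + j)) = τ := by
    funext j
    simp [hτ]
  have hmul : ∀ q : ℕ, G.D a τ (q * p) = q * G.D a π p := by
    intro q
    induction q with
    | zero => simp [D_zero]
    | succ q ih =>
      rw [Nat.succ_mul, Nat.add_comm, D_add, hper, ih, hp1]
      push_cast
      ring
  have hp' : (0 : ℝ) < p := by exact_mod_cast hp
  have hle : G.MP τ ≤ a + G.D a π p / p := by
    apply G.MP_le_of_frequently
    rw [frequently_atTop]
    intro n
    refine ⟨(n + 1) * p, by nlinarith, ?_⟩
    rw [G.avg_eq a τ (by positivity), hmul]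
    apply le_of_eq
    push_cast
    field_simp
  have := div_neg_of_neg_of_pos hneg hp'
  linarith

/-- A finite path along `f`-edges inside `A` decomposes into a closed walk at its first vertex `u`,
one edge, and a path inside `A \ {u}`; induction on `A` bounds its shifted weight. -/
lemma path_lower [Fintype V] [DecidableEq V] (G : GameGraph V) {a K : ℝ} {f : V → V}
    (hK0 : 0 ≤ K) (hK : ∀ u v, |(G.w u v : ℝ) - a| ≤ K)
    (hfwin : ∀ v π, G.IsPlayFrom v π → G.ConsEvePos f π → a ≤ G.MP π)
    (c : ℕ) : ∀ (A : Finset V), A.card = c → ∀ (π : ℕ → V) (n : ℕ), (∀ i ≤ n, π i ∈ A) →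
      (∀ i < n, G.FEdge f (π i) (π (i + 1))) → -(c * K) ≤ G.D a π n := by
  induction c with
  | zero =>
    intro A hA π n hmem
    rw [Finset.card_eq_zero] at hA
    simpa [hA] using hmem 0 (Nat.zero_le n)
  | succ c ih =>
    intro A hA π n hmem hE
    -- `j` is the last visit to the first vertex of the path
    obtain ⟨j, hjn, hjeq, hjmax⟩ : ∃ j ≤ n, π j = π 0 ∧ ∀ i, j < i → i ≤ n → π i ≠ π 0 :=
      ⟨Nat.findGreatest (fun i => π i = π 0) n, Nat.findGreatest_le n,
        Nat.findGreatest_spec (P := fun i => π i = π 0) (Nat.zero_le n) rfl,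
        fun i h1 h2 => Nat.findGreatest_is_greatest (P := fun i => π i = π 0) h1 h2⟩
    have hD : 0 ≤ G.D a π j := by
      rcases Nat.eq_zero_or_pos j with h0 | h0
      · rw [h0, D_zero]
      · exact G.closed_walk_nonneg hfwin h0 hjeq fun i hi => hE i (by omega)
    have hcK : 0 ≤ (c : ℝ) * K := by positivity
    push_cast
    rcases hjn.lt_or_eq with h | h
    · obtain ⟨m, rfl⟩ : ∃ m, n = (j + 1) + m := ⟨n - (j + 1), by omega⟩
      have hrest := ih (A.erase (π 0))
        (by rw [Finset.card_erase_of_mem (hmem 0 (Nat.zero_le _)), hA]; rfl)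
        (fun i => π (j + 1 + i)) m
        (fun i hi => Finset.mem_erase.2
          ⟨hjmax _ (by omega) (by omega), hmem _ (by omega)⟩)
        (fun i hi => hE (j + 1 + i) (by omega))
      rw [D_add, D_succ]
      have := (abs_le.1 (hK (π j) (π (j + 1)))).1
      linarith
    · rw [h] at hD
      linarith

/-! ### The combined strategy -/

/-- The start of the history on which `σ₂` is played at time `i`: the time right after the last
time before `i` at which `D` was negative, and `0` if there is none. -/
noncomputable def restart (G : GameGraph V) (a : ℝ) (π : ℕ → V) : ℕ → ℕ
  | 0 => 0
  | i + 1 => open Classical in if G.D a π i < 0 then i + 1 else restart G a π i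

lemma restart_le (G : GameGraph V) (a : ℝ) (π : ℕ → V) (i : ℕ) : G.restart a π i ≤ i := by
  induction i with
  | zero => simp [restart]
  | succ i ih =>
    rw [restart]
    split_ifs <;> omega

lemma restart_congr (G : GameGraph V) (a : ℝ) {π τ : ℕ → V} {i : ℕ}
    (h : ∀ j ≤ i, π j = τ j) : G.restart a π i = G.restart a τ i := by
  induction i with
  | zero => simp [restart]
  | succ i ih =>
    rw [restart, restart, ih fun j hj => h j (by omega),
      G.D_congr a fun j hj => h j (by omega : j ≤ i + 1)]

/-- Eve's move after the prefix `π 0, …, π i`. -/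
noncomputable def move (G : GameGraph V) (a : ℝ) (f : V → V) (σ₂ : List V → V)
    (π : ℕ → V) (i : ℕ) : V :=
  open Classical in
  if G.D a π i < 0 then f (π i)
  else σ₂ (prefixList (fun j => π (G.restart a π i + j)) (i - G.restart a π i))

lemma move_congr (G : GameGraph V) (a : ℝ) (f : V → V) (σ₂ : List V → V) {π τ : ℕ → V} {i : ℕ}
    (h : ∀ j ≤ i, π j = τ j) : G.move a f σ₂ π i = G.move a f σ₂ τ i := by
  have hle := G.restart_le a τ i
  unfold move
  rw [G.D_congr a h, h i le_rfl, G.restart_congr a h]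
  congr 2
  unfold prefixList
  congr 1
  funext j
  exact h _ (by omega)

/-- Eve's combined strategy as a function of the history; the history is read as an infinite
sequence by padding it with `v₀`, which `move` never looks at. -/
noncomputable def combined (G : GameGraph V) (a : ℝ) (f : V → V) (σ₂ : List V → V) (v₀ : V)
    (l : List V) : V :=
  G.move a f σ₂ (fun j => l.getD j v₀) (l.length - 1)

lemma combined_prefixList (G : GameGraph V) (a : ℝ) (f : V → V) (σ₂ : List V → V) (v₀ : V)
    (π : ℕ → V) (i : ℕ) : G.combined a f σ₂ v₀ (prefixList π i) = G.move a f σ₂ π i := by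
  have hlen : (prefixList π i).length - 1 = i := by simp [prefixList]
  unfold combined
  rw [hlen]
  apply move_congr
  intro j hj
  have : j < (prefixList π i).length := by simp [prefixList]; omega
  rw [List.getD_eq_getElem _ _ this]
  exact List.getElem_ofFn _

lemma combined_legal (G : GameGraph V) (a : ℝ) {f : V → V} {σ₂ : List V → V} (v₀ : V)
    (hf : ∀ v ∈ G.Eve, G.E v (f v)) (hσ₂ : G.EveLegal σ₂) :
    G.EveLegal (G.combined a f σ₂ v₀) := by
  intro l v hv
  have hlen : (l ++ [v]).length - 1 = l.length := by simp
  have hlast : (l ++ [v]).getD l.length v₀ = v := by simp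
  unfold combined move
  rw [hlen]
  set m := G.restart a (fun j => (l ++ [v]).getD j v₀) l.length with hm
  have hml : m ≤ l.length := G.restart_le a _ _
  split_ifs
  · beta_reduce
    rw [hlast]
    exact hf v hv
  · unfold prefixList
    rw [List.ofFn_succ', List.concat_eq_append]
    have : (l ++ [v]).getD (m + ((Fin.last (l.length - m) : Fin _) : ℕ)) v₀ = v := by
      rw [Fin.val_last, Nat.add_sub_cancel' hml, hlast]
    beta_reduce
    rw [this]
    exact hσ₂ _ v hv

/-- A bound below on `D` along plays on which `f` is followed whenever `D < 0`: `D` is negative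
only after a stretch of `f`-edges that starts at a value `≥ -K`. -/
lemma D_lower [Fintype V] (G : GameGraph V) {a K : ℝ} {f : V → V}
    (hK0 : 0 ≤ K) (hK : ∀ u v, |(G.w u v : ℝ) - a| ≤ K)
    (hfwin : ∀ v π, G.IsPlayFrom v π → G.ConsEvePos f π → a ≤ G.MP π)
    {π : ℕ → V} (hE : ∀ i, G.D a π i < 0 → G.FEdge f (π i) (π (i + 1))) (k : ℕ) :
    -(K + Fintype.card V * K) ≤ G.D a π k := by
  classical
  have key : 0 ≤ G.D a π k ∨
      ∃ m ≤ k, -K ≤ G.D a π m ∧ ∀ i, m ≤ i → i ≤ k → G.D a π i < 0 := by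
    induction k with
    | zero => exact Or.inl (G.D_zero a π).ge
    | succ k ih =>
      rcases le_or_gt 0 (G.D a π (k + 1)) with h | h
      · exact Or.inl h
      · right
        rcases ih with h0 | ⟨m, hmk, hm, hneg⟩
        · refine ⟨k + 1, le_rfl, ?_, fun i h1 h2 => ?_⟩
          · rw [D_succ]
            have := (abs_le.1 (hK (π k) (π (k + 1)))).1
            linarith
          · rwa [le_antisymm h2 h1]
        · refine ⟨m, by omega, hm, fun i h1 h2 => ?_⟩
          rcases h2.lt_or_eq with h3 | rfl
          · exact hneg i h1 (by omega)
          · exact h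
  have hcK : 0 ≤ (Fintype.card V : ℝ) * K := by positivity
  rcases key with h | ⟨m, hmk, hm, hneg⟩
  · linarith
  · obtain ⟨n, rfl⟩ := Nat.exists_eq_add_of_le hmk
    have := G.path_lower hK0 hK hfwin (Fintype.card V) Finset.univ rfl (fun i => π (m + i)) n
      (fun i _ => Finset.mem_univ _)
      (fun i hi => hE (m + i) (hneg (m + i) (by omega) (by omega)))
    rw [D_add]
    linarith

lemma restart_eq_of_nonneg (G : GameGraph V) {a : ℝ} {π : ℕ → V} {N : ℕ}
    (hN : G.restart a π N = N) (h : ∀ k ≥ N, 0 ≤ G.D a π k) (j : ℕ) :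
    G.restart a π (N + j) = N := by
  induction j with
  | zero => exact hN
  | succ j ih =>
    rw [← add_assoc, restart, if_neg (not_lt.2 (h _ (by omega))), ih]

end GameGraph

/-- Let `I` be a finite union of real intervals with
`a = inf I > -∞` and `a ∈ I`. If Eve has a positional strategy `f` guaranteeing
`MP(π) ≥ a` from every vertex, and a strategy `σ₂` guaranteeing
`MP(π) ∈ (-∞, a] ∪ I` from every vertex, then from every vertex she has a strategy
guaranteeing `MP(π) ∈ I`. -/
theorem stmt5 {V : Type} [Fintype V] (G : GameGraph V) (r : ℕ)
    (Is : Fin r → Set ℝ) (hconn : ∀ i, (Is i).OrdConnected)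
    (I : Set ℝ) (hI : I = ⋃ i, Is i)
    (hbdd : BddBelow I) (a : ℝ) (ha : a = sInf I) (haI : a ∈ I)
    (f : V → V) (hf : ∀ v ∈ G.Eve, G.E v (f v))
    (hfwin : ∀ v π, G.IsPlayFrom v π → G.ConsEvePos f π → a ≤ G.MP π)
    (σ₂ : List V → V) (hσ₂ : G.EveLegal σ₂)
    (h₂win : ∀ v π, G.IsPlayFrom v π → G.ConsEve σ₂ π → G.MP π ∈ Set.Iic a ∪ I) :
    ∀ v : V, ∃ σ : List V → V, G.EveLegal σ ∧
      ∀ π, G.IsPlayFrom v π → G.ConsEve σ π → G.MP π ∈ I := by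
  classical
  intro v₀
  refine ⟨G.combined a f σ₂ v₀, G.combined_legal a v₀ hf hσ₂, ?_⟩
  intro π hπ hcons
  have hmove : ∀ i, π i ∈ G.Eve → π (i + 1) = G.move a f σ₂ π i := fun i hi => by
    rw [hcons i hi, G.combined_prefixList]
  obtain ⟨K, hK0, hK⟩ := G.exists_bound a
  have hge : a ≤ G.MP π := by
    refine G.le_MP_of_D_lower (G.D_lower hK0 hK hfwin fun i hi => ⟨hπ.2 i, fun hEve => ?_⟩)
    rw [hmove i hEve, GameGraph.move, if_pos hi]
  by_cases hfreq : ∃ᶠ k in atTop, G.D a π k < 0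
  · rwa [le_antisymm (G.MP_le_of_frequently_D_neg hfreq) hge]
  · have hex : ∃ N, ∀ k ≥ N, 0 ≤ G.D a π k := by
      simpa [not_frequently, eventually_atTop] using hfreq
    -- minimality of `N` makes `σ₂` restart exactly at time `N`
    obtain ⟨N, hN, hmin⟩ : ∃ N, (∀ k ≥ N, 0 ≤ G.D a π k) ∧
        ∀ M < N, ¬ ∀ k ≥ M, 0 ≤ G.D a π k :=
      ⟨Nat.find hex, Nat.find_spec hex, fun M hM => Nat.find_min hex hM⟩
    have hrN : G.restart a π N = N := by
      cases N with
      | zero => rfl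
      | succ M =>
        have hM : G.D a π M < 0 := by
          by_contra! h
          refine hmin M (Nat.lt_succ_self M) fun k hk => ?_
          rcases hk.lt_or_eq with h1 | rfl
          · exact hN k h1
          · exact h
        rw [GameGraph.restart, if_pos hM]
    have hτ := h₂win (π N) (fun j => π (N + j)) ⟨rfl, fun i => hπ.2 (N + i)⟩ (by
      intro i hi
      have h := hmove (N + i) hi
      rw [GameGraph.move, if_neg (not_lt.2 (hN _ (by omega))),
        G.restart_eq_of_nonneg hrN hN, Nat.add_sub_cancel_left] at h
      exact h)
    rw [G.MP_shift] at hτ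
    rcases hτ with h | h
    · rwa [le_antisymm h hge]
    · exact h
end
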